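/- arXiv:2405.16364 — 6 statements merged into one kernel-verified Lean document; each statement's English description precedes it below -/
import Mathlib

section
/- Let n ≥ 1, γ ∈ (0,2) and β ∈ (0,1). There exists a constant C > 0, depending only on n, γ and β, such that for every Schwartz function f : ℝⁿ → ℝ and every x ∈ ℝⁿ, C · (‖f‖_{C^β})^{γ/(1−β)} · ∫_{ℝⁿ} |∇f(x) − ∇f(x+y)|² / |y|^{n+γ} dy ≥ |∇f(x)|^{2+γ/(1−β)}. -/
open MeasureTheory

section CVHelpers

lemma cv_bounded {E F : Type*} [NormedAddCommGroup E] [NormedSpace ℝ E]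
    [NormedAddCommGroup F] [NormedSpace ℝ F] (g : SchwartzMap E F) :
    ∃ K : ℝ, 0 ≤ K ∧ ∀ x, ‖g x‖ ≤ K :=
  ⟨SchwartzMap.seminorm ℝ 0 0 g, by positivity, fun x => SchwartzMap.norm_le_seminorm ℝ g x⟩

lemma cv_lipschitz {E F : Type*} [NormedAddCommGroup E] [NormedSpace ℝ E]
    [NormedAddCommGroup F] [NormedSpace ℝ F] (g : SchwartzMap E F) :
    ∃ K : ℝ, 0 ≤ K ∧ ∀ x y, ‖g x - g y‖ ≤ K * ‖x - y‖ := by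
  obtain ⟨K, hK, h⟩ := cv_bounded (SchwartzMap.fderivCLM ℝ E F g)
  refine ⟨K, hK, fun x y => ?_⟩
  refine Convex.norm_image_sub_le_of_norm_fderiv_le (𝕜 := ℝ) (s := Set.univ)
    (fun z _ => g.differentiableAt) (fun z _ => ?_) convex_univ (Set.mem_univ _) (Set.mem_univ _)
  simpa [SchwartzMap.fderivCLM_apply] using h z

lemma cv_holder_bdd {E : Type*} [NormedAddCommGroup E] [NormedSpace ℝ E]
    (f : SchwartzMap E ℝ) {β : ℝ} (h0 : 0 < β) (h1 : β < 1) :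
    BddAbove (Set.range fun p : E × E => |f p.1 - f p.2| / ‖p.1 - p.2‖ ^ β) := by
  obtain ⟨K, hK, hb⟩ := cv_bounded f
  obtain ⟨K', hK', hl⟩ := cv_lipschitz f
  refine ⟨K' + 2 * K, ?_⟩
  rintro _ ⟨⟨a, b⟩, rfl⟩
  simp only
  have ha := hb a
  have hb' := hb b
  have hab := hl a b
  have htri := norm_sub_le (f a) (f b)
  rw [Real.norm_eq_abs] at hab htri
  rcases eq_or_lt_of_le (norm_nonneg (a - b)) with hd | hd
  · rw [← hd, Real.zero_rpow h0.ne', div_zero]; positivity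
  rw [div_le_iff₀ (Real.rpow_pos_of_pos hd β)]
  rcases le_total ‖a - b‖ 1 with hd1 | hd1
  · have : ‖a - b‖ ≤ ‖a - b‖ ^ β := by
      simpa using Real.rpow_le_rpow_of_exponent_ge hd hd1 h1.le
    nlinarith
  · have : 1 ≤ ‖a - b‖ ^ β := Real.one_le_rpow hd1 h0.le
    nlinarith

lemma cv_grad_sub {n : ℕ} (f : SchwartzMap (EuclideanSpace ℝ (Fin n)) ℝ)
    (x y : EuclideanSpace ℝ (Fin n)) :
    ‖gradient f x - gradient f y‖ = ‖SchwartzMap.fderivCLM ℝ _ _ f x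
      - SchwartzMap.fderivCLM ℝ _ _ f y‖ := by
  simp only [gradient, SchwartzMap.fderivCLM_apply, ← map_sub, LinearIsometryEquiv.norm_map]

lemma cv_grad_cont {n : ℕ} (f : SchwartzMap (EuclideanSpace ℝ (Fin n)) ℝ) :
    Continuous (gradient f) := by
  have h : Continuous fun x => fderiv ℝ f x := by
    have := (SchwartzMap.fderivCLM ℝ _ _ f).continuous
    simpa [funext (SchwartzMap.fderivCLM_apply ℝ f)] using this
  exact (LinearIsometryEquiv.continuous _).comp h

lemma cv_radial {n : ℕ} (hn : 1 ≤ n) {γ : ℝ} (h0 : 0 < γ) (h2 : γ < 2) :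
    Integrable (fun y : EuclideanSpace ℝ (Fin n) =>
      if ‖y‖ < 1 then ‖y‖ ^ (2 - ((n : ℝ) + γ)) else ‖y‖ ^ (-((n : ℝ) + γ))) := by
  have : Nonempty (Fin n) := ⟨⟨0, hn⟩⟩
  have := integrable_fun_norm_addHaar (volume : Measure (EuclideanSpace ℝ (Fin n)))
    (f := fun r : ℝ => if r < 1 then r ^ (2 - ((n : ℝ) + γ)) else r ^ (-((n : ℝ) + γ)))
  refine this.2 ?_
  rw [finrank_euclideanSpace_fin]
  have hpow : ∀ r : ℝ, 0 < r → ∀ s : ℝ, r ^ (n - 1) * r ^ s = r ^ ((n : ℝ) - 1 + s) := by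
    intro r hr s
    rw [Real.rpow_add hr, ← Real.rpow_natCast, Nat.cast_sub hn, Nat.cast_one]
  have hu : Set.Ioi (0 : ℝ) = Set.Ioo 0 1 ∪ Set.Ici 1 := by
    rw [Set.Ioo_union_Ici_eq_Ioi one_pos]
  rw [hu]
  refine IntegrableOn.union ?_ ?_
  · refine ((intervalIntegral.integrableOn_Ioo_rpow_iff (s := 1 - γ) one_pos).2
      (by linarith)).congr_fun ?_ measurableSet_Ioo
    intro r hr
    simp only [smul_eq_mul, if_pos hr.2]
    rw [hpow r hr.1]; congr 1; ring
  · rw [integrableOn_Ici_iff_integrableOn_Ioi]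
    refine (integrableOn_Ioi_rpow_of_lt (a := -1 - γ) (by linarith) one_pos).congr_fun ?_
      measurableSet_Ioi
    intro r hr
    have hr' : (1 : ℝ) < r := hr
    simp only [smul_eq_mul, if_neg (not_lt.2 hr'.le)]
    rw [hpow r (by linarith)]; congr 1; ring

lemma cv_integrable {n : ℕ} (hn : 1 ≤ n) {γ : ℝ} (h0 : 0 < γ) (h2 : γ < 2)
    (f : SchwartzMap (EuclideanSpace ℝ (Fin n)) ℝ) (x : EuclideanSpace ℝ (Fin n)) :
    Integrable (fun y => ‖gradient (⇑f) x - gradient (⇑f) (x + y)‖ ^ 2 /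
      ‖y‖ ^ ((n : ℝ) + γ)) := by
  obtain ⟨K, hK, hb⟩ := cv_bounded (SchwartzMap.fderivCLM ℝ _ _ f)
  obtain ⟨K', hK', hl⟩ := cv_lipschitz (SchwartzMap.fderivCLM ℝ _ _ f)
  have hp : 0 < (n : ℝ) + γ := by positivity
  refine ((cv_radial hn h0 h2).const_mul (K' ^ 2 + (2 * K) ^ 2)).mono' ?_ ?_
  · have := cv_grad_cont f
    have h1 : Measurable fun y => ‖gradient (⇑f) x - gradient (⇑f) (x + y)‖ ^ 2 :=
      (by fun_prop : Continuous fun y => ‖gradient (⇑f) x - gradient (⇑f) (x + y)‖ ^ 2).measurable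
    have h3 : Measurable fun y : EuclideanSpace ℝ (Fin n) => ‖y‖ ^ ((n : ℝ) + γ) := by fun_prop
    exact (h1.div h3).aestronglyMeasurable
  · refine Filter.Eventually.of_forall fun y => ?_
    rw [Real.norm_of_nonneg (by positivity), cv_grad_sub]
    have e1 := hl x (x + y)
    have e2 := (norm_sub_le _ _).trans (add_le_add (hb x) (hb (x + y)))
    rw [show x - (x + y) = -y by abel, norm_neg] at e1
    set d := ‖SchwartzMap.fderivCLM ℝ _ _ f x - SchwartzMap.fderivCLM ℝ _ _ f (x + y)‖
    have hd : 0 ≤ d := norm_nonneg _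
    rcases eq_or_lt_of_le (norm_nonneg y) with hy | hy
    · rw [← hy, Real.zero_rpow hp.ne', div_zero]
      positivity
    split_ifs with h
    · rw [Real.rpow_sub hy, mul_div_assoc']
      refine div_le_div_of_nonneg_right ?_ (by positivity)
      have : d ^ 2 ≤ (K' * ‖y‖) ^ 2 := by gcongr
      rw [show ((2 : ℝ)) = ((2 : ℕ) : ℝ) by norm_num, Real.rpow_natCast]
      push_cast
      nlinarith [sq_nonneg (2 * K * ‖y‖)]
    · rw [Real.rpow_neg hy.le, ← div_eq_mul_inv]
      refine div_le_div_of_nonneg_right ?_ (by positivity)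
      have : d ^ 2 ≤ (2 * K) ^ 2 := by gcongr; linarith
      nlinarith [sq_nonneg K']

/-- one-dimensional lower bound along a segment -/
lemma cv_line {n : ℕ} (f : SchwartzMap (EuclideanSpace ℝ (Fin n)) ℝ)
    (x y e : EuclideanSpace ℝ (Fin n)) {G L : ℝ} (hL : 0 < L) (hG : 0 < G) (he : ‖e‖ = 1)
    (hge : inner ℝ (gradient f x) e = G)
    (hdiff : f (x + y + L • e) - f (x + y) ≤ G * L / 2) :
    3 / 16 * G ^ 2 * L ≤
      ∫ t in Set.Icc 0 L, ‖gradient (⇑f) x - gradient (⇑f) (x + (y + t • e))‖ ^ 2 := by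
  have hc := cv_grad_cont f
  rw [integral_Icc_eq_integral_Ioc, ← intervalIntegral.integral_of_le hL.le]
  have hftc : ∫ t in (0 : ℝ)..L, inner ℝ (gradient f (x + (y + t • e))) e
      = f (x + y + L • e) - f (x + y) := by
    have := intervalIntegral.integral_eq_sub_of_hasDerivAt (a := 0) (b := L)
      (f := fun t : ℝ => f (x + (y + t • e)))
      (f' := fun t => inner ℝ (gradient f (x + (y + t • e))) e) ?_ ?_
    · rw [this]; simp [add_assoc]
    · intro t _
      rw [inner_gradient_left]
      have h1 : HasDerivAt (fun t : ℝ => x + (y + t • e)) e t := by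
        simpa using (((hasDerivAt_id t).smul_const e).const_add y).const_add x
      exact (f.differentiableAt (x := x + (y + t • e))).hasFDerivAt.comp_hasDerivAt t h1
    · exact Continuous.intervalIntegrable (by fun_prop) _ _
  have hmono : ∫ t in (0 : ℝ)..L,
        ((G / 2) * (G - inner ℝ (gradient f (x + (y + t • e))) e) - G ^ 2 / 16) ≤
      ∫ t in (0 : ℝ)..L, ‖gradient (⇑f) x - gradient (⇑f) (x + (y + t • e))‖ ^ 2 := by
    refine intervalIntegral.integral_mono_on hL.le
      (Continuous.intervalIntegrable (by fun_prop) _ _)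
      (Continuous.intervalIntegrable (by fun_prop) _ _) fun t _ => ?_
    have h1 := abs_real_inner_le_norm (gradient (⇑f) x - gradient (⇑f) (x + (y + t • e))) e
    rw [inner_sub_left, hge, he, mul_one] at h1
    have h2 := sq_le_sq' (by linarith [neg_abs_le (G - inner ℝ (gradient f (x + (y + t • e))) e)])
      ((le_abs_self _).trans h1)
    nlinarith [sq_nonneg ((G - inner ℝ (gradient f (x + (y + t • e))) e) - G / 4)]
  refine le_trans ?_ hmono
  rw [intervalIntegral.integral_sub (Continuous.intervalIntegrable (by fun_prop) _ _)
    (Continuous.intervalIntegrable (by fun_prop) _ _), intervalIntegral.integral_const_mul,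
    intervalIntegral.integral_sub (Continuous.intervalIntegrable (by fun_prop) _ _)
    (Continuous.intervalIntegrable (by fun_prop) _ _), hftc]
  simp only [intervalIntegral.integral_const, smul_eq_mul, sub_zero]
  nlinarith

lemma cv_ball {n : ℕ} (H : EuclideanSpace ℝ (Fin n) → ℝ) (hH : Continuous H) (h0 : ∀ y, 0 ≤ H y)
    (e : EuclideanSpace ℝ (Fin n)) (he : ‖e‖ = 1) {L A : ℝ} (hL : 0 < L)
    (hline : ∀ y, A * L ≤ ∫ t in Set.Icc 0 L, H (y + t • e)) :
    L ^ n * volume.real (Metric.ball (0 : EuclideanSpace ℝ (Fin n)) 1) * A ≤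
      ∫ y in Metric.closedBall 0 (2 * L), H y := by
  set B := Metric.closedBall (0 : EuclideanSpace ℝ (Fin n)) L with hB
  have hBc : IsCompact B := isCompact_closedBall _ _
  have hprod : Integrable (Function.uncurry fun (y : EuclideanSpace ℝ (Fin n)) (t : ℝ) =>
      H (y + t • e)) ((volume.restrict B).prod (volume.restrict (Set.Icc 0 L))) := by
    rw [Measure.prod_restrict]
    exact ContinuousOn.integrableOn_compact (hBc.prod isCompact_Icc)
      (by unfold Function.uncurry; fun_prop)
  have hswap := integral_integral_swap hprod
  have hlow : volume.real B • (A * L) ≤ ∫ y in B, ∫ t in Set.Icc 0 L, H (y + t • e) :=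
    setIntegral_ge_of_const_le hBc.measurableSet hBc.measure_lt_top.ne (fun y _ => hline y)
      hprod.integral_prod_left
  have hup : ∫ t in Set.Icc 0 L, ∫ y in B, H (y + t • e) ≤
      ∫ t in Set.Icc 0 L, ∫ y in Metric.closedBall 0 (2 * L), H y := by
    refine setIntegral_mono_on hprod.integral_prod_right (by simp) measurableSet_Icc ?_
    intro t ht
    have hpre : B = (fun y => y + t • e) ⁻¹' (Metric.closedBall (t • e) L) := by
      ext y; simp [hB, dist_eq_norm]
    rw [hpre, (measurePreserving_add_right volume (t • e)).setIntegral_preimage_emb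
      (measurableEmbedding_addRight _)]
    refine setIntegral_mono_set (hH.continuousOn.integrableOn_compact (isCompact_closedBall _ _))
      (Filter.Eventually.of_forall h0) (LE.le.eventuallyLE ?_)
    refine Metric.closedBall_subset_closedBall' ?_
    rw [dist_zero_right, norm_smul, he, mul_one, Real.norm_of_nonneg ht.1]
    linarith [ht.2]
  rw [← hswap] at hup
  have := hlow.trans hup
  rw [hB, Measure.addHaar_real_closedBall _ _ hL.le, finrank_euclideanSpace_fin] at this
  simp only [setIntegral_const, smul_eq_mul, Real.volume_real_Icc_of_le hL.le, sub_zero] at this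
  refine le_of_mul_le_mul_left ?_ hL
  linarith

end CVHelpers

/-- Hölder-norm version of the Constantin–Vicol nonlinear lower bound:
`D_γ(∇f)(x) ≥ |∇f(x)|^{2+γ/(1-β)} / (C ‖f‖_{C^β}^{γ/(1-β)})`. -/
theorem constantin_vicol_holder_lower_bound (n : ℕ) (hn : 1 ≤ n) (γ β : ℝ)
    (hγ : γ ∈ Set.Ioo (0 : ℝ) 2) (hβ : β ∈ Set.Ioo (0 : ℝ) 1) :
    ∃ C > (0 : ℝ), ∀ (f : SchwartzMap (EuclideanSpace ℝ (Fin n)) ℝ)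
      (x : EuclideanSpace ℝ (Fin n)),
      C * ((⨆ z : EuclideanSpace ℝ (Fin n), |f z|) +
            ⨆ p : EuclideanSpace ℝ (Fin n) × EuclideanSpace ℝ (Fin n),
              |f p.1 - f p.2| / ‖p.1 - p.2‖ ^ β) ^ (γ / (1 - β)) *
          ∫ y : EuclideanSpace ℝ (Fin n),
            ‖gradient (⇑f) x - gradient (⇑f) (x + y)‖ ^ 2 / ‖y‖ ^ ((n : ℝ) + γ) ≥
        ‖gradient (⇑f) x‖ ^ (2 + γ / (1 - β)) := by
  obtain ⟨hγ0, hγ2⟩ := hγ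
  obtain ⟨hβ0, hβ1⟩ := hβ
  have hb : 0 < 1 - β := by linarith
  have hp : 0 < (n : ℝ) + γ := by positivity
  set s := γ / (1 - β) with hs
  have hs0 : 0 < s := by positivity
  set ω := volume.real (Metric.ball (0 : EuclideanSpace ℝ (Fin n)) 1) with hω
  have hω0 : 0 < ω := by
    rw [hω, measureReal_def]
    exact ENNReal.toReal_pos (Metric.measure_ball_pos _ _ one_pos).ne' measure_ball_lt_top.ne
  set c := 3 / 16 * ω / 2 ^ ((n : ℝ) + γ) with hc
  have hc0 : 0 < c := by positivity
  refine ⟨2 ^ s / c, by positivity, fun f x => ?_⟩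
  set S := ⨆ z : EuclideanSpace ℝ (Fin n), |f z| with hS
  set T := ⨆ p : EuclideanSpace ℝ (Fin n) × EuclideanSpace ℝ (Fin n),
              |f p.1 - f p.2| / ‖p.1 - p.2‖ ^ β with hT
  have hS0 : 0 ≤ S := Real.iSup_nonneg fun z => abs_nonneg _
  have hT0 : 0 ≤ T := Real.iSup_nonneg fun z => by positivity
  set N := S + T with hN
  set G := ‖gradient (⇑f) x‖ with hG
  set D := ∫ y : EuclideanSpace ℝ (Fin n),
            ‖gradient (⇑f) x - gradient (⇑f) (x + y)‖ ^ 2 / ‖y‖ ^ ((n : ℝ) + γ) with hD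
  have hD0 : 0 ≤ D := integral_nonneg fun y => by positivity
  have hN0 : 0 ≤ N := add_nonneg hS0 hT0
  rcases eq_or_lt_of_le (norm_nonneg (gradient (⇑f) x)) with hg | hg
  · rw [hG, ← hg, Real.zero_rpow (by linarith)]
    exact mul_nonneg (mul_nonneg (div_nonneg (Real.rpow_nonneg (by norm_num) _) hc0.le)
      (Real.rpow_nonneg hN0 _)) hD0
  rw [← hG] at hg
  have hhol : ∀ a b, |f a - f b| ≤ N * ‖a - b‖ ^ β := by
    intro a b
    rcases eq_or_ne a b with rfl | hab
    · simp; positivity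
    have h1 : |f a - f b| / ‖a - b‖ ^ β ≤ T := le_ciSup (cv_holder_bdd f hβ0 hβ1) (a, b)
    have hpos : 0 < ‖a - b‖ := norm_pos_iff.2 (sub_ne_zero.2 hab)
    rw [div_le_iff₀ (by positivity)] at h1
    refine h1.trans ?_
    gcongr
    linarith
  have hNpos : 0 < N := by
    refine lt_of_le_of_ne hN0 fun h => ?_
    have hconst : (f : EuclideanSpace ℝ (Fin n) → ℝ) = fun _ => f 0 := by
      funext a
      have := hhol a 0
      rw [← h, zero_mul] at this
      exact sub_eq_zero.1 (abs_nonpos_iff.1 this)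
    have : gradient (⇑f) x = 0 := by rw [hconst, gradient_fun_const]
    rw [hG, this, norm_zero] at hg
    exact lt_irrefl _ hg
  set L := (2 * N / G) ^ (1 / (1 - β)) with hLdef
  have hL : 0 < L := by positivity
  have hL1 : L ^ (1 - β) = 2 * N / G := by
    rw [hLdef, ← Real.rpow_mul (by positivity), one_div_mul_cancel hb.ne', Real.rpow_one]
  have hLs : L ^ γ = (2 * N / G) ^ s := by
    rw [hLdef, ← Real.rpow_mul (by positivity), hs]; congr 1; ring
  have hNL : N * L ^ β = G * L / 2 := by
    have h1 : L = L ^ (1 - β) * L ^ β := by rw [← Real.rpow_add hL]; simp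
    have h2 : G * L ^ (1 - β) = 2 * N := by rw [hL1]; field_simp
    calc N * L ^ β = (2 * N) * L ^ β / 2 := by ring
      _ = G * (L ^ (1 - β) * L ^ β) / 2 := by rw [← h2]; ring
      _ = G * L / 2 := by rw [← h1]
  set e := G⁻¹ • gradient (⇑f) x with he
  have he1 : ‖e‖ = 1 := by
    rw [he, norm_smul, norm_inv, hG, norm_norm, ← hG, inv_mul_cancel₀ hg.ne']
  have hge : inner ℝ (gradient (⇑f) x) e = G := by
    rw [he, real_inner_smul_right, real_inner_self_eq_norm_sq, ← hG]; field_simp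
  have hcont := cv_grad_cont f
  have hball := cv_ball (fun y => ‖gradient (⇑f) x - gradient (⇑f) (x + y)‖ ^ 2) (by fun_prop)
    (fun y => by positivity) e he1 hL (A := 3 / 16 * G ^ 2) (fun y => by
      refine cv_line f x y e hL hg he1 hge ?_
      refine (le_abs_self _).trans ((hhol _ _).trans ?_)
      rw [add_sub_cancel_left, norm_smul, he1, mul_one, Real.norm_of_nonneg hL.le, hNL])
  have hint := cv_integrable hn hγ0 hγ2 f x
  have hDlow : (∫ y in Metric.closedBall 0 (2 * L),
      ‖gradient (⇑f) x - gradient (⇑f) (x + y)‖ ^ 2) / (2 * L) ^ ((n : ℝ) + γ) ≤ D := by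
    rw [← integral_div]
    refine le_trans ?_ (setIntegral_le_integral (s := Metric.closedBall 0 (2 * L)) hint
      (Filter.Eventually.of_forall fun y => by positivity))
    refine setIntegral_mono_on ?_ hint.integrableOn measurableSet_closedBall ?_
    · exact ContinuousOn.integrableOn_compact (isCompact_closedBall _ _) (by fun_prop)
    · intro y hy
      rw [mem_closedBall_zero_iff] at hy
      rcases eq_or_ne y 0 with rfl | hy0
      · simp
      have : 0 < ‖y‖ := norm_pos_iff.2 hy0
      gcongr
  have hfin : c * G ^ 2 ≤ D * L ^ γ := by
    have h1 := (div_le_div_of_nonneg_right hball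
      (by positivity : 0 ≤ (2 * L) ^ ((n : ℝ) + γ))).trans hDlow
    rw [Real.mul_rpow (by norm_num) hL.le, Real.rpow_add hL, Real.rpow_natCast] at h1
    refine le_trans (le_of_eq ?_) (mul_le_mul_of_nonneg_right h1 (by positivity : 0 ≤ L ^ γ))
    rw [hc]
    field_simp
    exact hω
  rw [hLs, Real.div_rpow (by positivity) hg.le, Real.mul_rpow (by norm_num) hN0] at hfin
  rw [ge_iff_le, Real.rpow_add hg]
  have hGs : 0 < G ^ s := by positivity
  have hfin' : c * G ^ 2 * G ^ s ≤ D * (2 ^ s * N ^ s) := by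
    rw [mul_div_assoc', le_div_iff₀ hGs] at hfin
    exact hfin
  rw [Real.rpow_two, div_mul_eq_mul_div, div_mul_eq_mul_div, le_div_iff₀ hc0]
  linarith
end

section
/- Let n ≥ 1, s ∈ (0,1), and let θ : ℝⁿ → ℝ be a Schwartz function. Then ∬_{ℝⁿ×ℝⁿ} θ(x)² (θ(x) − θ(y)) / |x − y|^{n+s} dx dy = (1/2) ∬_{ℝⁿ×ℝⁿ} (θ(x) + θ(y)) (θ(x) − θ(y))² / |x − y|^{n+s} dx dy, both double integrals being absolutely convergent. -/
open MeasureTheory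

lemma kernel_integrable (n : ℕ) (hn : 1 ≤ n) (s : ℝ) (hs : s ∈ Set.Ioo (0 : ℝ) 1) :
    Integrable (fun z : EuclideanSpace ℝ (Fin n) => min 1 ‖z‖ / ‖z‖ ^ ((n : ℝ) + s)) := by
  obtain ⟨hs0, hs1⟩ := hs
  have : Nonempty (Fin n) := ⟨⟨0, hn⟩⟩
  have key := (integrable_fun_norm_addHaar (E := EuclideanSpace ℝ (Fin n)) volume
    (f := fun r : ℝ => min 1 r / r ^ ((n : ℝ) + s)))
  refine key.2 ?_
  rw [finrank_euclideanSpace_fin, ← Set.Ioc_union_Ioi_eq_Ioi (zero_le_one' ℝ)]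
  have hpow : ∀ y : ℝ, 0 < y → y ^ (n - 1) = y ^ ((n : ℝ) - 1) := by
    intro y hy
    rw [← Real.rpow_natCast, Nat.cast_sub hn, Nat.cast_one]
  refine IntegrableOn.union ?_ ?_
  · have h : IntegrableOn (fun y : ℝ => y ^ (-s)) (Set.Ioc 0 1) :=
      (intervalIntegrable_iff_integrableOn_Ioc_of_le zero_le_one).1
        (intervalIntegral.intervalIntegrable_rpow' (by linarith))
    refine h.congr_fun ?_ measurableSet_Ioc
    intro y hy
    simp only [smul_eq_mul]
    rw [min_eq_right hy.2, hpow y hy.1, mul_div_assoc', eq_div_iff (by have := hy.1; positivity),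
      ← Real.rpow_add hy.1, ← Real.rpow_add_one hy.1.ne']
    congr 1; ring
  · have h : IntegrableOn (fun y : ℝ => y ^ (-1 - s)) (Set.Ioi 1) :=
      integrableOn_Ioi_rpow_of_lt (by linarith) one_pos
    refine h.congr_fun ?_ measurableSet_Ioi
    intro y hy
    have hy1 : (1 : ℝ) < y := hy
    have hy0 : 0 < y := by linarith
    simp only [smul_eq_mul]
    rw [min_eq_left hy1.le, hpow y hy0, mul_div_assoc', eq_div_iff (by positivity),
      ← Real.rpow_add hy0, mul_one]
    congr 1; ring

lemma schwartz_diff_bound (n : ℕ) (θ : SchwartzMap (EuclideanSpace ℝ (Fin n)) ℝ) :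
    ∃ C : ℝ, 0 ≤ C ∧ ∀ x y, |θ x - θ y| ≤ C * min 1 ‖x - y‖ := by
  set A := SchwartzMap.seminorm ℝ 0 0 θ
  set B := SchwartzMap.seminorm ℝ 0 0 (SchwartzMap.fderivCLM ℝ _ ℝ θ)
  have hA : 0 ≤ A := apply_nonneg _ _
  have hB : 0 ≤ B := apply_nonneg _ _
  refine ⟨2 * A + B, by positivity, fun x y => ?_⟩
  have h1 : ‖θ x - θ y‖ ≤ B * ‖x - y‖ :=
    Convex.norm_image_sub_le_of_norm_fderiv_le (𝕜 := ℝ) (s := Set.univ)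
      (fun z _ => θ.differentiableAt)
      (fun z _ => SchwartzMap.norm_le_seminorm ℝ (SchwartzMap.fderivCLM ℝ _ ℝ θ) z)
      convex_univ (Set.mem_univ _) (Set.mem_univ _)
  have h2 : ‖θ x - θ y‖ ≤ 2 * A := by
    have := norm_sub_le (θ x) (θ y)
    have hx : ‖θ x‖ ≤ A := SchwartzMap.norm_le_seminorm ℝ θ x
    have hy : ‖θ y‖ ≤ A := SchwartzMap.norm_le_seminorm ℝ θ y
    linarith
  rw [Real.norm_eq_abs] at h1 h2
  have h0 := norm_nonneg (x - y)
  rcases min_cases (1 : ℝ) ‖x - y‖ with ⟨h, _⟩ | ⟨h, _⟩ <;> rw [h]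
  · linarith
  · nlinarith



/-- Symmetrization identity
`∬ θ(x)²(θ(x)−θ(y))/|x−y|^{n+s} = (1/2) ∬ (θ(x)+θ(y))(θ(x)−θ(y))²/|x−y|^{n+s}`,
together with the absolute convergence of both double integrals. -/
theorem symmetrization_identity (n : ℕ) (hn : 1 ≤ n) (s : ℝ) (hs : s ∈ Set.Ioo (0 : ℝ) 1)
    (θ : SchwartzMap (EuclideanSpace ℝ (Fin n)) ℝ) :
    Integrable (fun p : EuclideanSpace ℝ (Fin n) × EuclideanSpace ℝ (Fin n) =>
        (θ p.1) ^ 2 * (θ p.1 - θ p.2) / ‖p.1 - p.2‖ ^ ((n : ℝ) + s)) ∧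
    Integrable (fun p : EuclideanSpace ℝ (Fin n) × EuclideanSpace ℝ (Fin n) =>
        (θ p.1 + θ p.2) * (θ p.1 - θ p.2) ^ 2 / ‖p.1 - p.2‖ ^ ((n : ℝ) + s)) ∧
    ∫ p : EuclideanSpace ℝ (Fin n) × EuclideanSpace ℝ (Fin n),
        (θ p.1) ^ 2 * (θ p.1 - θ p.2) / ‖p.1 - p.2‖ ^ ((n : ℝ) + s) =
      (1 / 2) * ∫ p : EuclideanSpace ℝ (Fin n) × EuclideanSpace ℝ (Fin n),
        (θ p.1 + θ p.2) * (θ p.1 - θ p.2) ^ 2 / ‖p.1 - p.2‖ ^ ((n : ℝ) + s) := by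

  obtain ⟨C, hC0, hC⟩ := schwartz_diff_bound n θ
  have hG := kernel_integrable n hn s hs
  have hsq : Integrable (fun x => θ x ^ 2) := (θ.memLp 2).integrable_sq
  have hconv := (hsq.convolution_integrand (ContinuousLinearMap.mul ℝ ℝ) hG).swap.const_mul C
  have h1 : Integrable (fun p : EuclideanSpace ℝ (Fin n) × EuclideanSpace ℝ (Fin n) =>
        (θ p.1) ^ 2 * (θ p.1 - θ p.2) / ‖p.1 - p.2‖ ^ ((n : ℝ) + s)) := by
    refine hconv.mono' ?_ (Filter.Eventually.of_forall fun p => ?_)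
    · have hm : Measurable θ := θ.continuous.measurable
      exact Measurable.aestronglyMeasurable (by fun_prop)
    · simp only [Function.comp, ContinuousLinearMap.mul_apply', Prod.fst_swap, Prod.snd_swap]
      rw [norm_sub_rev p.2 p.1, Real.norm_eq_abs, abs_div, abs_mul, abs_of_nonneg (sq_nonneg _),
        abs_of_nonneg (by positivity : 0 ≤ ‖p.1 - p.2‖ ^ ((n : ℝ) + s)), ← mul_div_assoc,
        ← mul_div_assoc]
      refine div_le_div_of_nonneg_right ?_ (by positivity)
      calc _ ≤ θ p.1 ^ 2 * (C * min 1 ‖p.1 - p.2‖) := mul_le_mul_of_nonneg_left (hC _ _) (sq_nonneg _)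
        _ = _ := by ring
  have h1s := h1.swap
  have hsum : ∀ p : EuclideanSpace ℝ (Fin n) × EuclideanSpace ℝ (Fin n),
      (θ p.1 + θ p.2) * (θ p.1 - θ p.2) ^ 2 / ‖p.1 - p.2‖ ^ ((n : ℝ) + s) =
      (θ p.1) ^ 2 * (θ p.1 - θ p.2) / ‖p.1 - p.2‖ ^ ((n : ℝ) + s) +
      (θ p.swap.1) ^ 2 * (θ p.swap.1 - θ p.swap.2) / ‖p.swap.1 - p.swap.2‖ ^ ((n : ℝ) + s) := by
    intro p
    simp only [Prod.fst_swap, Prod.snd_swap]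
    rw [norm_sub_rev p.2 p.1]
    ring
  refine ⟨h1, ?_, ?_⟩
  · simp_rw [hsum]
    exact h1.add h1s
  · simp_rw [hsum]
    have e1 := integral_add h1 h1s
    have e2 := integral_prod_swap (μ := (volume : Measure (EuclideanSpace ℝ (Fin n))))
      (ν := (volume : Measure (EuclideanSpace ℝ (Fin n))))
      (fun p : EuclideanSpace ℝ (Fin n) × EuclideanSpace ℝ (Fin n) =>
        (θ p.1) ^ 2 * (θ p.1 - θ p.2) / ‖p.1 - p.2‖ ^ ((n : ℝ) + s))
    simp only [Function.comp, ← Measure.volume_eq_prod] at e1 e2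
    rw [e1, e2]
    ring
end

section
/- Let n ≥ 2 and γ ∈ (0,2). There exists a constant C > 0, depending only on n and γ, such that for every Schwartz function f : ℝⁿ → ℝ and all x, h ∈ ℝⁿ, C · (sup_{z ∈ ℝⁿ} |f(z)|)^γ · |h|^γ · ∫_{ℝⁿ} |δ_h f(x) − δ_h f(x+y)|² / |y|^{n+γ} dy ≥ |δ_h f(x)|^{γ+2}. -/
open MeasureTheory

lemma aux_radial (n : ℕ) (hn : 2 ≤ n) (γ : ℝ) (hγ : γ ∈ Set.Ioo (0 : ℝ) 2) :
    Integrable (fun y : EuclideanSpace ℝ (Fin n) =>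
      min (‖y‖ ^ 2) 1 / ‖y‖ ^ ((n : ℝ) + γ)) := by
  have : Nonempty (Fin n) := ⟨⟨0, by omega⟩⟩
  have : Nontrivial (EuclideanSpace ℝ (Fin n)) := inferInstance
  have key := (integrable_fun_norm_addHaar (E := EuclideanSpace ℝ (Fin n)) volume
    (f := fun t : ℝ => min (t ^ 2) 1 / t ^ ((n : ℝ) + γ)))
  refine key.2 ?_
  have hpow : ∀ t : ℝ, 0 < t → t ^ (n - 1) = t ^ ((n : ℝ) - 1) := by
    intro t ht
    rw [← Real.rpow_natCast, Nat.cast_sub (by omega), Nat.cast_one]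
  rw [← Set.Ioc_union_Ioi_eq_Ioi (zero_le_one' ℝ), finrank_euclideanSpace_fin]
  refine IntegrableOn.union ?_ ?_
  · rw [integrableOn_Ioc_iff_integrableOn_Ioo]
    have h1 : IntegrableOn (fun t : ℝ => t ^ (1 - γ)) (Set.Ioo 0 1) :=
      (intervalIntegral.integrableOn_Ioo_rpow_iff one_pos).2 (by linarith [hγ.2])
    refine h1.congr_fun ?_ measurableSet_Ioo
    intro t ht
    have ht0 : 0 < t := ht.1
    have hm : min (t ^ 2) 1 = t ^ (2 : ℝ) := by
      rw [min_eq_left (by nlinarith [ht.2])]; simp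
    simp only [smul_eq_mul]
    rw [hm, hpow t ht0, ← Real.rpow_sub ht0, ← Real.rpow_add ht0]
    congr 1; ring
  · have h1 : IntegrableOn (fun t : ℝ => t ^ (-1 - γ)) (Set.Ioi 1) :=
      integrableOn_Ioi_rpow_of_lt (by linarith [hγ.1]) one_pos
    refine h1.congr_fun ?_ measurableSet_Ioi
    intro t ht
    have ht1 : 1 < t := ht
    have ht0 : 0 < t := by linarith
    have hm : min (t ^ 2) 1 = t ^ (0 : ℝ) := by
      rw [min_eq_right (by nlinarith)]; simp
    simp only [smul_eq_mul]
    rw [hm, hpow t ht0, ← Real.rpow_sub ht0, ← Real.rpow_add ht0]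
    congr 1; ring

lemma aux_lip {n : ℕ} (f : SchwartzMap (EuclideanSpace ℝ (Fin n)) ℝ) :
    ∃ L : ℝ, 0 ≤ L ∧ ∀ x y, |f y - f x| ≤ L * ‖y - x‖ := by
  refine ⟨SchwartzMap.seminorm ℝ 0 1 f, apply_nonneg _ _, fun x y => ?_⟩
  have := Convex.norm_image_sub_le_of_norm_fderiv_le (𝕜 := ℝ) (f := f) (s := Set.univ)
    (C := SchwartzMap.seminorm ℝ 0 1 f) (x := x) (y := y)
    (fun z _ => f.differentiableAt) (fun z _ => ?_) convex_univ trivial trivial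
  · simpa using this
  · rw [← norm_iteratedFDeriv_one]
    exact SchwartzMap.norm_iteratedFDeriv_le_seminorm ℝ f 1 z

lemma aux_integrable (n : ℕ) (hn : 2 ≤ n) (γ : ℝ) (hγ : γ ∈ Set.Ioo (0 : ℝ) 2)
    (f : SchwartzMap (EuclideanSpace ℝ (Fin n)) ℝ) (x h : EuclideanSpace ℝ (Fin n))
    (M : ℝ) (hM : ∀ z, |f z| ≤ M) :
    Integrable (fun y : EuclideanSpace ℝ (Fin n) =>
      |(f (x + h) - f x) - (f (x + y + h) - f (x + y))| ^ 2 / ‖y‖ ^ ((n : ℝ) + γ)) := by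
  obtain ⟨L, hL, hlip⟩ := aux_lip f
  have hM0 : 0 ≤ M := (abs_nonneg _).trans (hM 0)
  refine ((aux_radial n hn γ hγ).const_mul ((2 * L) ^ 2 + (4 * M) ^ 2)).mono' ?_ ?_
  · refine Measurable.aestronglyMeasurable ?_
    have hf : Measurable f := f.continuous.measurable
    fun_prop
  · refine Filter.Eventually.of_forall fun y => ?_
    rw [Real.norm_of_nonneg (by positivity), ← mul_div_assoc]
    have hp : 0 ≤ ‖y‖ ^ ((n : ℝ) + γ) := by positivity
    refine div_le_div_of_nonneg_right ?_ hp
    have e1 : |(f (x + h) - f x) - (f (x + y + h) - f (x + y))| ≤ 2 * L * ‖y‖ := by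
      have h1 := hlip (x + y + h) (x + h)
      have h2 := hlip (x + y) x
      have r1 : x + h - (x + y + h) = -y := by abel
      have r2 : x - (x + y) = -y := by abel
      rw [r1, norm_neg] at h1
      rw [r2, norm_neg] at h2
      rw [abs_le] at *
      constructor <;> linarith [h1.1, h1.2, h2.1, h2.2]
    have e2 : |(f (x + h) - f x) - (f (x + y + h) - f (x + y))| ≤ 4 * M := by
      have h1 := abs_le.1 (hM (x + h))
      have h2 := abs_le.1 (hM x)
      have h3 := abs_le.1 (hM (x + y + h))
      have h4 := abs_le.1 (hM (x + y))
      rw [abs_le]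
      constructor <;> linarith [h1.1, h1.2, h2.1, h2.2, h3.1, h3.2, h4.1, h4.2]
    have s1 := pow_le_pow_left₀ (abs_nonneg _) e1 2
    have s2 := pow_le_pow_left₀ (abs_nonneg _) e2 2
    rcases min_choice (‖y‖ ^ 2) (1 : ℝ) with hc | hc
    · rw [hc]; nlinarith [sq_nonneg (4 * M * ‖y‖)]
    · rw [hc]; nlinarith [sq_nonneg (2 * L)]

lemma aux_vol (n : ℕ) {r : ℝ} (hr : 0 < r) :
    volume.real (Metric.ball (0 : EuclideanSpace ℝ (Fin n)) r) =
      r ^ n * volume.real (Metric.ball (0 : EuclideanSpace ℝ (Fin n)) 1) := by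
  rw [measureReal_def, Measure.addHaar_ball_of_pos _ _ hr, ENNReal.toReal_mul,
    ENNReal.toReal_ofReal (by positivity), finrank_euclideanSpace_fin, measureReal_def]

/-- tent function -/
noncomputable def aux_tent (n : ℕ) (R : ℝ) (y : EuclideanSpace ℝ (Fin n)) : ℝ :=
  max 0 (1 - ‖y‖ / R)

lemma aux_tent_cont (n : ℕ) (R : ℝ) : Continuous (aux_tent n R) := by
  unfold aux_tent; fun_prop

lemma aux_tent_nonneg (n : ℕ) (R : ℝ) (y) : 0 ≤ aux_tent n R y := le_max_left _ _

lemma aux_tent_zero (n : ℕ) {R : ℝ} (hR : 0 < R) (y) (hy : R ≤ ‖y‖) : aux_tent n R y = 0 := by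
  have : 1 ≤ ‖y‖ / R := (one_le_div hR).2 hy
  exact max_eq_left (by linarith)

lemma aux_tent_le_one (n : ℕ) {R : ℝ} (hR : 0 < R) (y) : aux_tent n R y ≤ 1 := by
  have : 0 ≤ ‖y‖ / R := by positivity
  exact max_le zero_le_one (by linarith)

lemma aux_tent_compact (n : ℕ) {R : ℝ} (hR : 0 < R) : HasCompactSupport (aux_tent n R) := by
  refine HasCompactSupport.intro (isCompact_closedBall 0 R) fun y hy => ?_
  refine aux_tent_zero n hR y ?_
  simp at hy; exact hy.le

lemma aux_tent_integrable (n : ℕ) {R : ℝ} (hR : 0 < R) : Integrable (aux_tent n R) :=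
  (aux_tent_cont n R).integrable_of_hasCompactSupport (aux_tent_compact n hR)

lemma aux_tent_lip (n : ℕ) {R : ℝ} (hR : 0 < R) (y h) :
    |aux_tent n R (y - h) - aux_tent n R y| ≤ ‖h‖ / R := by
  unfold aux_tent
  rw [max_comm 0, max_comm 0]
  refine (abs_max_sub_max_le_abs _ _ _).trans ?_
  have e : 1 - ‖y - h‖ / R - (1 - ‖y‖ / R) = (‖y‖ - ‖y - h‖) / R := by ring
  rw [e, abs_div, abs_of_pos hR]
  refine div_le_div_of_nonneg_right ?_ hR.le
  have := abs_norm_sub_norm_le y (y - h)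
  rwa [sub_sub_cancel] at this

lemma aux_tent_int (n : ℕ) {R : ℝ} (hR : 0 < R) :
    R ^ n * volume.real (Metric.ball (0 : EuclideanSpace ℝ (Fin n)) 1) / 2 ^ (n + 1) ≤
      ∫ y, aux_tent n R y := by
  have h1 : ∫ y in Metric.ball (0 : EuclideanSpace ℝ (Fin n)) (R / 2), (1 / 2 : ℝ) ≤
      ∫ y in Metric.ball (0 : EuclideanSpace ℝ (Fin n)) (R / 2), aux_tent n R y := by
    refine setIntegral_mono_on (integrableOn_const (by exact measure_ball_lt_top.ne))
      (aux_tent_integrable n hR).integrableOn measurableSet_ball fun y hy => ?_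
    have hy' : ‖y‖ < R / 2 := by simpa using hy
    refine le_trans ?_ (le_max_right _ _)
    have : ‖y‖ / R ≤ 1 / 2 := by rw [div_le_iff₀ hR]; linarith
    linarith
  have h2 := setIntegral_le_integral (s := Metric.ball (0 : EuclideanSpace ℝ (Fin n)) (R / 2))
    (aux_tent_integrable n hR) (Filter.Eventually.of_forall (aux_tent_nonneg n R))
  refine le_trans (le_of_eq ?_) (h1.trans h2)
  rw [setIntegral_const, aux_vol n (half_pos hR), smul_eq_mul, div_pow, pow_succ]
  field_simp

lemma aux_diff_int (n : ℕ) {R M : ℝ} (hR : 0 < R)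
    (f : SchwartzMap (EuclideanSpace ℝ (Fin n)) ℝ) (x h : EuclideanSpace ℝ (Fin n))
    (hM : ∀ z, |f z| ≤ M) (hh : ‖h‖ ≤ R) :
    |∫ y, (f (x + y + h) - f (x + y)) * aux_tent n R y| ≤
      M * (‖h‖ / R) * ((2 * R) ^ n *
        volume.real (Metric.ball (0 : EuclideanSpace ℝ (Fin n)) 1)) := by
  have hM0 : 0 ≤ M := (abs_nonneg _).trans (hM 0)
  have hc := f.continuous
  have ht := aux_tent_cont n R
  have i1 : Integrable (fun y => f (x + y + h) * aux_tent n R y) :=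
    Continuous.integrable_of_hasCompactSupport (by fun_prop) (aux_tent_compact n hR).mul_left
  have i2 : Integrable (fun y => f (x + y) * aux_tent n R y) :=
    Continuous.integrable_of_hasCompactSupport (by fun_prop) (aux_tent_compact n hR).mul_left
  have e0 : ∫ y, f (x + y + h) * aux_tent n R y = ∫ y, f (x + y) * aux_tent n R (y - h) := by
    rw [← integral_sub_right_eq_self (fun y => f (x + y + h) * aux_tent n R y) h]
    refine integral_congr_ae (Filter.Eventually.of_forall fun y => ?_)
    have : x + (y - h) + h = x + y := by abel
    simp only [this]
  have i3 : Integrable (fun y => f (x + y) * aux_tent n R (y - h)) := by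
    have := i1.comp_sub_right h
    refine this.congr (Filter.Eventually.of_forall fun y => ?_)
    have : x + (y - h) + h = x + y := by abel
    simp only [this]
  have e : ∫ y, (f (x + y + h) - f (x + y)) * aux_tent n R y =
      ∫ y, f (x + y) * (aux_tent n R (y - h) - aux_tent n R y) := by
    simp only [sub_mul, mul_sub]
    rw [integral_sub i1 i2, integral_sub i3 i2, e0]
  have hsupp : ∀ y, y ∉ Metric.ball (0 : EuclideanSpace ℝ (Fin n)) (2 * R) →
      f (x + y) * (aux_tent n R (y - h) - aux_tent n R y) = 0 := by
    intro y hy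
    have hy' : 2 * R ≤ ‖y‖ := by simpa using hy
    have := norm_sub_norm_le y h
    rw [aux_tent_zero n hR y (by linarith), aux_tent_zero n hR (y - h) (by linarith)]
    simp
  rw [e, ← setIntegral_eq_integral_of_forall_compl_eq_zero hsupp, ← aux_vol n (by positivity),
    ← Real.norm_eq_abs]
  refine norm_setIntegral_le_of_norm_le_const measure_ball_lt_top fun y _ => ?_
  rw [norm_mul, Real.norm_eq_abs, Real.norm_eq_abs]
  exact mul_le_mul (hM _) (aux_tent_lip n hR y h) (abs_nonneg _) hM0

lemma aux_lower (n : ℕ) (hn : 2 ≤ n) (γ : ℝ) (hγ : γ ∈ Set.Ioo (0 : ℝ) 2)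
    {R M : ℝ} (hR : 0 < R)
    (f : SchwartzMap (EuclideanSpace ℝ (Fin n)) ℝ) (x h : EuclideanSpace ℝ (Fin n))
    (hM : ∀ z, |f z| ≤ M) (hh : ‖h‖ ≤ R) :
    (|f (x + h) - f x| ^ 2 / 2 ^ (n + 1) - 2 * |f (x + h) - f x| * (M * (‖h‖ / R)) * 2 ^ n) *
      volume.real (Metric.ball (0 : EuclideanSpace ℝ (Fin n)) 1) * R ^ (-γ) ≤
    ∫ y : EuclideanSpace ℝ (Fin n),
      |(f (x + h) - f x) - (f (x + y + h) - f (x + y))| ^ 2 / ‖y‖ ^ ((n : ℝ) + γ) := by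
  set a := f (x + h) - f x with ha
  set V := volume.real (Metric.ball (0 : EuclideanSpace ℝ (Fin n)) 1) with hV
  have hc := f.continuous
  have ht := aux_tent_cont n R
  have hRp : 0 < R ^ ((n : ℝ) + γ) := by positivity
  have hn0 : 0 < (n : ℝ) + γ := by have := hγ.1; positivity
  have j1 : Integrable (fun y => a ^ 2 * aux_tent n R y) := (aux_tent_integrable n hR).const_mul _
  have j2 : Integrable (fun y => 2 * a * ((f (x + y + h) - f (x + y)) * aux_tent n R y)) :=
    (Continuous.integrable_of_hasCompactSupport (by fun_prop)
      (aux_tent_compact n hR).mul_left).const_mul _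
  have step1 : ∫ y, (a ^ 2 * aux_tent n R y -
        2 * a * ((f (x + y + h) - f (x + y)) * aux_tent n R y)) / R ^ ((n : ℝ) + γ) ≤
      ∫ y : EuclideanSpace ℝ (Fin n),
      |a - (f (x + y + h) - f (x + y))| ^ 2 / ‖y‖ ^ ((n : ℝ) + γ) := by
    have hae : ∀ᵐ y : EuclideanSpace ℝ (Fin n), y ≠ 0 := by
      have : Nonempty (Fin n) := ⟨⟨0, by omega⟩⟩
      exact Measure.ae_ne volume 0
    refine integral_mono_ae ((j1.sub j2).div_const _)
      (aux_integrable n hn γ hγ f x h M hM) ?_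
    filter_upwards [hae] with y hy0
    have hy : 0 < ‖y‖ := norm_pos_iff.2 hy0
    set u := f (x + y + h) - f (x + y)
    have hT := aux_tent_nonneg n R y
    show (a ^ 2 * aux_tent n R y - 2 * a * (u * aux_tent n R y)) / R ^ ((n : ℝ) + γ) ≤ _
    have b1 : a ^ 2 * aux_tent n R y - 2 * a * (u * aux_tent n R y) ≤
        |a - u| ^ 2 * aux_tent n R y := by
      rw [sq_abs]; nlinarith [mul_nonneg (sq_nonneg u) hT]
    rcases le_or_gt R ‖y‖ with hle | hlt
    · rw [aux_tent_zero n hR y hle]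
      simp only [mul_zero, sub_zero, zero_div]
      positivity
    · refine (div_le_div_of_nonneg_right b1 hRp.le).trans ?_
      refine div_le_div₀ (by positivity) ?_ (by positivity)
        (Real.rpow_le_rpow hy.le hlt.le hn0.le)
      exact mul_le_of_le_one_right (by positivity) (aux_tent_le_one n hR y)
  refine le_trans ?_ step1
  rw [integral_div, integral_sub j1 j2, integral_const_mul, integral_const_mul]
  have t1 := aux_tent_int n hR
  have t2 := aux_diff_int n hR f x h hM hh
  set J := ∫ y, (f (x + y + h) - f (x + y)) * aux_tent n R y
  rw [← hV] at t1 t2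
  have t3 : 2 * a * J ≤ 2 * |a| * (M * (‖h‖ / R) * ((2 * R) ^ n * V)) := by
    calc 2 * a * J ≤ |2 * a * J| := le_abs_self _
      _ = 2 * |a| * |J| := by rw [abs_mul, abs_mul, abs_two]
      _ ≤ _ := by gcongr
  have t4 := mul_le_mul_of_nonneg_left t1 (sq_nonneg a)
  rw [le_div_iff₀ hRp, mul_assoc, ← Real.rpow_add hR]
  have : -γ + ((n : ℝ) + γ) = n := by ring
  rw [this, Real.rpow_natCast, sq_abs]
  refine le_trans (le_of_eq ?_) (sub_le_sub t4 t3)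
  rw [mul_pow]; ring

/-- Nonlinear lower bound for finite differences:
`D_γ(δ_h f)(x) ≥ |δ_h f(x)|^{γ+2} / (C |h|^γ ‖f‖_∞^γ)`. -/
theorem finite_difference_lower_bound (n : ℕ) (hn : 2 ≤ n) (γ : ℝ)
    (hγ : γ ∈ Set.Ioo (0 : ℝ) 2) :
    ∃ C > (0 : ℝ), ∀ (f : SchwartzMap (EuclideanSpace ℝ (Fin n)) ℝ)
      (x h : EuclideanSpace ℝ (Fin n)),
      C * (⨆ z : EuclideanSpace ℝ (Fin n), |f z|) ^ γ * ‖h‖ ^ γ *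
          ∫ y : EuclideanSpace ℝ (Fin n),
            |(f (x + h) - f x) - (f (x + y + h) - f (x + y))| ^ 2 / ‖y‖ ^ ((n : ℝ) + γ) ≥
        |f (x + h) - f x| ^ (γ + 2) := by
  set V := volume.real (Metric.ball (0 : EuclideanSpace ℝ (Fin n)) 1) with hV
  have hVpos : 0 < V := by
    rw [hV, measureReal_def]
    exact ENNReal.toReal_pos (Metric.measure_ball_pos _ _ one_pos).ne' measure_ball_lt_top.ne
  set K : ℝ := 2 ^ (2 * n + 3) with hK
  have hKpos : 0 < K := by positivity
  refine ⟨2 ^ (n + 2) * K ^ γ / V, by positivity, fun f x h => ?_⟩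
  set M := ⨆ z : EuclideanSpace ℝ (Fin n), |f z| with hMdef
  have hM : ∀ z, |f z| ≤ M := fun z => by
    refine le_ciSup (f := fun z => |f z|) ⟨SchwartzMap.seminorm ℝ 0 0 f, ?_⟩ z
    rintro _ ⟨w, rfl⟩
    exact SchwartzMap.norm_le_seminorm ℝ f w
  have hγ0 := hγ.1
  rcases eq_or_ne (f (x + h) - f x) 0 with h0 | h0
  · rw [h0, abs_zero, Real.zero_rpow (by linarith)]
    have hM0 : 0 ≤ M := (abs_nonneg _).trans (hM 0)
    refine mul_nonneg (by positivity) (integral_nonneg fun y => by positivity)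
  have hA : 0 < |f (x + h) - f x| := abs_pos.2 h0
  have hA2 : |f (x + h) - f x| ≤ 2 * M := by
    have := abs_sub (f (x + h)) (f x)
    linarith [hM (x + h), hM x]
  have hMpos : 0 < M := by linarith
  have hhpos : 0 < ‖h‖ := by
    refine norm_pos_iff.2 fun hh => h0 ?_
    simp [hh]
  set A := |f (x + h) - f x| with hAdef
  have hR : 0 < K * M * ‖h‖ / A := by positivity
  have hK2 : 2 ≤ K := by
    calc (2 : ℝ) = 2 ^ 1 := by norm_num
      _ ≤ K := pow_le_pow_right₀ (by norm_num) (by omega)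
  have hhR : ‖h‖ ≤ K * M * ‖h‖ / A := by
    rw [le_div_iff₀ hA, mul_comm]
    gcongr
    nlinarith
  have low := aux_lower n hn γ hγ hR f x h hM hhR
  rw [← hV, ← hAdef] at low
  set I := ∫ y : EuclideanSpace ℝ (Fin n),
    |(f (x + h) - f x) - (f (x + y + h) - f (x + y))| ^ 2 / ‖y‖ ^ ((n : ℝ) + γ)
  have e1 : M * (‖h‖ / (K * M * ‖h‖ / A)) = A / K := by field_simp
  have e2 : A ^ 2 / 2 ^ (n + 1) - 2 * A * (A / K) * 2 ^ n = A ^ 2 / 2 ^ (n + 2) := by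
    rw [hK]
    have : (2 : ℝ) ^ (2 * n + 3) = 2 ^ n * 2 ^ n * 8 := by ring
    rw [this]
    field_simp
    ring
  have e3 : (K * M * ‖h‖ / A) ^ (-γ) = A ^ γ / (K ^ γ * M ^ γ * ‖h‖ ^ γ) := by
    rw [Real.rpow_neg hR.le, Real.div_rpow (by positivity) hA.le,
      Real.mul_rpow (by positivity) hhpos.le, Real.mul_rpow hKpos.le hMpos.le, inv_div]
  rw [e1, e2, e3] at low
  have hp : 0 ≤ 2 ^ (n + 2) * K ^ γ / V * M ^ γ * ‖h‖ ^ γ := by positivity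
  refine le_trans (le_of_eq ?_) (mul_le_mul_of_nonneg_left low hp)
  rw [Real.rpow_add hA, Real.rpow_two]
  field_simp
end

section
/- Let n ≥ 2 and α ∈ (0, 1/2). There exists a constant C > 0, depending only on n and α, such that for every Schwartz function f : ℝⁿ → ℝ and all x, h ∈ ℝⁿ, the Euclidean norm of the vector ∫_{ℝⁿ} ((x − y)/|x − y|^{n+2α}) · (f(y+h) − f(y)) dy is at most C · (sup_{z ∈ ℝⁿ} |f(z)| + ‖f‖_{L²(ℝⁿ)}). -/
open MeasureTheory

/-- The kernel `z / |z|^s`. -/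
noncomputable def vdbKer (n : ℕ) (s : ℝ) (z : EuclideanSpace ℝ (Fin n)) :
    EuclideanSpace ℝ (Fin n) := (‖z‖ ^ s)⁻¹ • z

lemma vdbKer_meas (n : ℕ) (s : ℝ) : Measurable (vdbKer n s) := by
  unfold vdbKer
  fun_prop

lemma vdbKer_norm (n : ℕ) (s : ℝ) (z : EuclideanSpace ℝ (Fin n)) :
    ‖vdbKer n s z‖ = (‖z‖ ^ s)⁻¹ * ‖z‖ := by
  unfold vdbKer
  rw [norm_smul, Real.norm_of_nonneg (by positivity)]

lemma vdbKer_near (n : ℕ) (hn : 2 ≤ n) (α : ℝ) (hα : α ∈ Set.Ioo (0 : ℝ) (1 / 2)) :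
    MemLp ((Metric.ball 0 1).indicator (vdbKer n (n + 2 * α))) 1 volume := by
  obtain ⟨h0, h1⟩ := hα
  have hm : AEStronglyMeasurable ((Metric.ball 0 1).indicator (vdbKer n (n + 2 * α))) volume :=
    ((vdbKer_meas n _).indicator measurableSet_ball).aestronglyMeasurable
  rw [memLp_one_iff_integrable, ← integrable_norm_iff hm]
  have : Nontrivial (EuclideanSpace ℝ (Fin n)) := by
    apply Module.nontrivial_of_finrank_pos (R := ℝ)
    simp; omega
  have key := (integrable_fun_norm_addHaar (volume : Measure (EuclideanSpace ℝ (Fin n)))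
    (f := (Set.Iio (1:ℝ)).indicator (fun r => (r ^ ((n:ℝ) + 2 * α))⁻¹ * r))).2 ?_
  · refine key.congr (Filter.Eventually.of_forall fun z => ?_)
    by_cases hz : ‖z‖ < 1 <;> simp [hz, Set.indicator, vdbKer_norm]
  · have h2 : IntegrableOn (fun r : ℝ => r ^ (-(2 * α))) (Set.Ioo 0 1) := by
      have := intervalIntegral.intervalIntegrable_rpow' (a := 0) (b := 1) (r := -(2 * α)) (by linarith)
      rw [intervalIntegrable_iff_integrableOn_Ioo_of_le zero_le_one] at this
      exact this
    have h3 : IntegrableOn ((Set.Ioo (0:ℝ) 1).indicator (fun r : ℝ => r ^ (-(2 * α))))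
        (Set.Ioi 0) := (h2.integrable_indicator measurableSet_Ioo).integrableOn
    refine h3.congr_fun (fun r hr => ?_) measurableSet_Ioi
    have hr : 0 < r := hr
    by_cases hz : r < 1
    · simp only [Set.indicator, Set.mem_Ioo, hr, hz, Set.mem_Iio, smul_eq_mul,
        finrank_euclideanSpace, Fintype.card_fin, and_self, if_true]
      rw [← Real.rpow_natCast, ← Real.rpow_neg hr.le, Nat.cast_sub (by omega)]
      nth_rw 4 [← Real.rpow_one r]
      rw [← Real.rpow_add hr, ← Real.rpow_add hr]
      congr 1
      push_cast
      ring
    · simp [hz]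

lemma vdbKer_far (n : ℕ) (hn : 2 ≤ n) (α : ℝ) (hα : α ∈ Set.Ioo (0 : ℝ) (1 / 2)) :
    MemLp ((Metric.ball 0 1)ᶜ.indicator (vdbKer n (n + 2 * α))) 2 volume := by
  obtain ⟨h0, h1⟩ := hα
  have hm : AEStronglyMeasurable ((Metric.ball 0 1)ᶜ.indicator (vdbKer n (n + 2 * α))) volume :=
    ((vdbKer_meas n _).indicator measurableSet_ball.compl).aestronglyMeasurable
  rw [memLp_two_iff_integrable_sq_norm hm]
  have : Nontrivial (EuclideanSpace ℝ (Fin n)) := by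
    apply Module.nontrivial_of_finrank_pos (R := ℝ)
    simp; omega
  have key := (integrable_fun_norm_addHaar (volume : Measure (EuclideanSpace ℝ (Fin n)))
    (f := (Set.Ici (1:ℝ)).indicator (fun r => ((r ^ ((n:ℝ) + 2 * α))⁻¹ * r) ^ 2))).2 ?_
  · refine key.congr (Filter.Eventually.of_forall fun z => ?_)
    by_cases hz : ‖z‖ < 1
    · simp [hz, Set.indicator]
    · simp [hz, not_lt.1 hz, Set.indicator, vdbKer_norm]
  · have hn' : (2:ℝ) ≤ n := by exact_mod_cast hn
    have h2 : IntegrableOn (fun r : ℝ => r ^ (1 - n - 4 * α)) (Set.Ici 1) := by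
      rw [integrableOn_Ici_iff_integrableOn_Ioi]
      exact integrableOn_Ioi_rpow_of_lt (by linarith) one_pos
    have h3 : IntegrableOn ((Set.Ici (1:ℝ)).indicator (fun r : ℝ => r ^ (1 - n - 4 * α)))
        (Set.Ioi 0) := (h2.integrable_indicator measurableSet_Ici).integrableOn
    refine h3.congr_fun (fun r hr => ?_) measurableSet_Ioi
    have hr : 0 < r := hr
    by_cases hz : 1 ≤ r
    · simp only [Set.indicator, hz, Set.mem_Ici, smul_eq_mul,
        finrank_euclideanSpace, Fintype.card_fin, if_true]
      rw [← Real.rpow_natCast, ← Real.rpow_neg hr.le, Nat.cast_sub (by omega)]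
      nth_rw 4 [← Real.rpow_one r]
      rw [← Real.rpow_add hr, ← Real.rpow_natCast, ← Real.rpow_mul hr.le, ← Real.rpow_add hr]
      congr 1
      push_cast
      ring
    · simp [hz]

/-- Uniform bound for the finite difference of the nonlocal velocity, `α ∈ (0, 1/2)`:
`|δ_h u(x)| ≤ C (‖f‖_∞ + ‖f‖_{L²})` (Riesz-kernel normalization constant removed). -/
theorem velocity_difference_bound (n : ℕ) (hn : 2 ≤ n) (α : ℝ)
    (hα : α ∈ Set.Ioo (0 : ℝ) (1 / 2)) :
    ∃ C > (0 : ℝ), ∀ (f : SchwartzMap (EuclideanSpace ℝ (Fin n)) ℝ)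
      (x h : EuclideanSpace ℝ (Fin n)),
      ‖∫ y : EuclideanSpace ℝ (Fin n),
          ((f (y + h) - f y) / ‖x - y‖ ^ ((n : ℝ) + 2 * α)) • (x - y)‖ ≤
        C * ((⨆ z : EuclideanSpace ℝ (Fin n), |f z|) + (eLpNorm (⇑f) 2 volume).toReal) := by
  have hK1 := vdbKer_near n hn α hα
  have hK2 := vdbKer_far n hn α hα
  set K1 := (Metric.ball 0 1).indicator (vdbKer n (n + 2 * α)) with hK1d
  set K2 := (Metric.ball 0 1)ᶜ.indicator (vdbKer n (n + 2 * α)) with hK2d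
  set A := (eLpNorm K1 1 volume).toReal with hA
  set B := (eLpNorm K2 2 volume).toReal with hB
  have hA0 : 0 ≤ A := ENNReal.toReal_nonneg
  have hB0 : 0 ≤ B := ENNReal.toReal_nonneg
  refine ⟨2 * A + 2 * B + 1, by positivity, fun f x h => ?_⟩
  set S := ⨆ z : EuclideanSpace ℝ (Fin n), |f z| with hS
  set L := (eLpNorm (⇑f) 2 volume).toReal with hL
  have hL0 : 0 ≤ L := ENNReal.toReal_nonneg
  have hS0 : 0 ≤ S := Real.iSup_nonneg fun z => abs_nonneg _
  have hbdd : BddAbove (Set.range fun z => |f z|) := by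
    obtain ⟨C, hC⟩ := f.decay 0 0
    refine ⟨C, ?_⟩
    rintro _ ⟨z, rfl⟩
    simpa using hC.2 z
  have hfS : ∀ z, |f z| ≤ S := fun z => le_ciSup hbdd z
  set d : EuclideanSpace ℝ (Fin n) → ℝ := fun y => f (y + h) - f y with hd
  have hdm : AEStronglyMeasurable d volume := by
    have : Continuous d := by
      have := f.continuous
      fun_prop
    exact this.aestronglyMeasurable
  have mp := Measure.measurePreserving_sub_left (volume : Measure (EuclideanSpace ℝ (Fin n))) x
  have mpa := measurePreserving_add_right (volume : Measure (EuclideanSpace ℝ (Fin n))) h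
  have e1 : eLpNorm (K1 ∘ fun y => x - y) 1 volume = ENNReal.ofReal A := by
    rw [eLpNorm_comp_measurePreserving hK1.1 mp, hA, ENNReal.ofReal_toReal hK1.2.ne]
  have e2 : eLpNorm (K2 ∘ fun y => x - y) 2 volume = ENNReal.ofReal B := by
    rw [eLpNorm_comp_measurePreserving hK2.1 mp, hB, ENNReal.ofReal_toReal hK2.2.ne]
  have m1 := hK1.1.comp_measurePreserving mp
  have m2 := hK2.1.comp_measurePreserving mp
  have d1 : eLpNorm d ⊤ volume ≤ ENNReal.ofReal (2 * S) := by
    refine (eLpNorm_le_of_ae_bound (C := 2 * S) (Filter.Eventually.of_forall fun y => ?_)).trans ?_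
    · have := abs_sub (f (y + h)) (f y)
      have := hfS (y + h)
      have := hfS y
      rw [Real.norm_eq_abs]
      simp only [hd]
      linarith
    · simp
  have hf2 := f.memLp 2 volume
  have d2 : eLpNorm d 2 volume ≤ ENNReal.ofReal (2 * L) := by
    have : d = (⇑f ∘ fun y => y + h) - ⇑f := rfl
    rw [this]
    refine (eLpNorm_sub_le (hf2.1.comp_measurePreserving mpa) hf2.1 (by norm_num)).trans ?_
    rw [eLpNorm_comp_measurePreserving hf2.1 mpa, two_mul, ENNReal.ofReal_add hL0 hL0, hL,
      ENNReal.ofReal_toReal hf2.2.ne]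
  have hdecomp : (fun y => ((f (y + h) - f y) / ‖x - y‖ ^ ((n : ℝ) + 2 * α)) • (x - y))
      = d • (K1 ∘ fun y => x - y) + d • (K2 ∘ fun y => x - y) := by
    rw [← smul_add]
    funext y
    have : K1 (x - y) + K2 (x - y) = vdbKer n (n + 2 * α) (x - y) :=
      congrFun (Set.indicator_self_add_compl (Metric.ball 0 1) (vdbKer n (n + 2 * α))) (x - y)
    simp only [Pi.smul_apply', Pi.add_apply, Function.comp, this]
    rw [vdbKer, smul_smul, div_eq_mul_inv]
  rw [hdecomp]
  have main : ‖∫ y, (d • (K1 ∘ fun y => x - y) + d • (K2 ∘ fun y => x - y)) y‖ₑ ≤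
      ENNReal.ofReal (2 * S * A + 2 * L * B) := by
    refine (enorm_integral_le_lintegral_enorm _).trans ?_
    rw [← eLpNorm_one_eq_lintegral_enorm]
    refine (eLpNorm_add_le (hdm.smul m1) (hdm.smul m2) le_rfl).trans ?_
    rw [ENNReal.ofReal_add (by positivity) (by positivity), ENNReal.ofReal_mul (p := 2 * S) (by positivity),
      ENNReal.ofReal_mul (p := 2 * L) (by positivity), ← e1, ← e2]
    refine add_le_add ?_ ?_
    · exact (eLpNorm_smul_le_eLpNorm_top_mul_eLpNorm 1 m1 d).trans (by gcongr)
    · exact (eLpNorm_smul_le_mul_eLpNorm (p := 2) (q := 2) (r := 1) m2 hdm).trans (by gcongr)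
  rw [← ofReal_norm, ENNReal.ofReal_le_ofReal_iff (by positivity)] at main
  refine main.trans ?_
  nlinarith [mul_nonneg hS0 hB0, mul_nonneg hL0 hA0]
end

section
/- Let n ≥ 2. There exists a constant C > 0, depending only on n, such that for every Schwartz function f : ℝⁿ → ℝ and all x, h ∈ ℝⁿ, the Euclidean norm of the vector v(x) := ∫_{|x−y|≤1} ((x − y)/|x − y|^{n+1}) (δ_h f(y) − δ_h f(x)) dy + ∫_{|x−y|>1} ((x − y)/|x − y|^{n+1}) δ_h f(y) dy satisfies |v(x)| ≤ C · (1 + (sup_{z} |f(z)|) · ln⁺ D₁(δ_h f)(x) + ‖f‖_{L²(ℝⁿ)}), where D₁(δ_h f)(x) := ∫_{ℝⁿ} |δ_h f(x) − δ_h f(x+y)|² / |y|^{n+1} dy. -/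
open MeasureTheory

namespace VelLog

/-- Surface-type constant. -/
noncomputable def kap (n : ℕ) : ℝ :=
  (n : ℝ) * (volume : Measure (EuclideanSpace ℝ (Fin n))).real (Metric.ball 0 1)

lemma kap_nonneg (n : ℕ) : 0 ≤ kap n := by unfold kap; positivity

lemma radial (n : ℕ) (hn : 2 ≤ n) (S : Set ℝ) (hS : MeasurableSet S) (hS0 : S ⊆ Set.Ioi 0)
    (F φ : ℝ → ℝ) (hF : ∀ r ∈ S, r ^ (n - 1) * F r = φ r) (hφ : IntegrableOn φ S) :
    Integrable (fun w : EuclideanSpace ℝ (Fin n) => S.indicator F ‖w‖) ∧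
    ∫ w : EuclideanSpace ℝ (Fin n), S.indicator F ‖w‖ = kap n * ∫ r in S, φ r := by
  have : Nonempty (Fin n) := ⟨⟨0, by omega⟩⟩
  have hd : Module.finrank ℝ (EuclideanSpace ℝ (Fin n)) = n := finrank_euclideanSpace_fin
  have hfun : (fun y : ℝ => y ^ (n - 1) • S.indicator F y) = S.indicator φ := by
    funext r
    by_cases hr : r ∈ S
    · simp [hr, hF r hr]
    · simp [hr]
  constructor
  · rw [integrable_fun_norm_addHaar (volume : Measure (EuclideanSpace ℝ (Fin n)))
      (f := S.indicator F), hd, hfun]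
    exact ((integrable_indicator_iff hS).2 hφ).integrableOn
  · rw [integral_fun_norm_addHaar, hd, hfun, setIntegral_indicator hS,
      Set.inter_eq_self_of_subset_right hS0]
    simp [kap, mul_assoc]

lemma radial1 (n : ℕ) (hn : 2 ≤ n) (ρ : ℝ) (hρ : 0 < ρ) :
    Integrable (fun w : EuclideanSpace ℝ (Fin n) =>
      (Set.Ioc 0 ρ).indicator (fun r => r / r ^ n) ‖w‖) ∧
    ∫ w : EuclideanSpace ℝ (Fin n), (Set.Ioc 0 ρ).indicator (fun r => r / r ^ n) ‖w‖
      = kap n * ρ := by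
  have := radial n hn (Set.Ioc 0 ρ) measurableSet_Ioc (fun r hr => hr.1) (fun r => r / r ^ n)
    (fun _ => 1) (by
      intro r hr
      have h0 : r ≠ 0 := hr.1.ne'
      obtain ⟨m, rfl⟩ : ∃ m, n = m + 1 := ⟨n - 1, by omega⟩
      simp only [Nat.add_sub_cancel]
      field_simp
      ring) (by simp)
  simpa [hρ.le] using this

lemma radial2 (n : ℕ) (hn : 2 ≤ n) (ρ : ℝ) (hρ : 0 < ρ) (hρ1 : ρ ≤ 1) :
    Integrable (fun w : EuclideanSpace ℝ (Fin n) =>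
      (Set.Ioc ρ 1).indicator (fun r => 1 / r ^ n) ‖w‖) ∧
    ∫ w : EuclideanSpace ℝ (Fin n), (Set.Ioc ρ 1).indicator (fun r => 1 / r ^ n) ‖w‖
      = kap n * Real.log (1 / ρ) := by
  have := radial n hn (Set.Ioc ρ 1) measurableSet_Ioc (fun r hr => hρ.trans hr.1)
    (fun r => 1 / r ^ n)
    (fun r => 1 / r) (by
      intro r hr
      have h0 : r ≠ 0 := (hρ.trans hr.1).ne'
      obtain ⟨m, rfl⟩ : ∃ m, n = m + 1 := ⟨n - 1, by omega⟩
      simp only [Nat.add_sub_cancel]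
      field_simp
      ring) (by
      refine IntegrableOn.mono_set (t := Set.Icc ρ 1) ?_ Set.Ioc_subset_Icc_self
      apply ContinuousOn.integrableOn_Icc
      intro r hr
      have h0 : r ≠ 0 := (hρ.trans_le hr.1).ne'
      exact ContinuousAt.continuousWithinAt (by fun_prop (disch := assumption)))
  rwa [← intervalIntegral.integral_of_le hρ1, integral_one_div_of_pos hρ one_pos] at this

lemma radial3 (n : ℕ) (hn : 2 ≤ n) (k : ℕ) (hk : n < k) :
    Integrable (fun w : EuclideanSpace ℝ (Fin n) =>
      (Set.Ioi 1).indicator (fun r : ℝ => 1 / r ^ k) ‖w‖) := by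
  refine (radial n hn (Set.Ioi 1) measurableSet_Ioi (fun r hr => Set.mem_Ioi.2 (one_pos.trans hr))
    (fun r => 1 / r ^ k)
    (fun r => r ^ (-((k - n + 1 : ℕ) : ℝ))) (by
      intro r hr
      have h0 : 0 < r := one_pos.trans hr
      obtain ⟨m, rfl⟩ : ∃ m, n = m + 1 := ⟨n - 1, by omega⟩
      obtain ⟨j, rfl⟩ : ∃ j, k = m + 1 + j := ⟨k - (m+1), by omega⟩
      rw [Real.rpow_neg h0.le, Real.rpow_natCast]
      simp only [Nat.add_sub_cancel, Nat.add_sub_cancel_left]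
      field_simp
      ring) ?_).1
  apply integrableOn_Ioi_rpow_of_lt _ one_pos
  have : (1 : ℝ) < ((k - n + 1 : ℕ) : ℝ) := by exact_mod_cast (by omega)
  linarith

variable {n : ℕ} (f : SchwartzMap (EuclideanSpace ℝ (Fin n)) ℝ)

lemma lip : ∃ L : ℝ, ∀ a b, |f a - f b| ≤ L * ‖a - b‖ := by
  obtain ⟨L, hL, h⟩ := f.decay 0 1
  refine ⟨L, fun a b => ?_⟩
  refine Convex.norm_image_sub_le_of_norm_fderiv_le (𝕜 := ℝ) (s := Set.univ) (f := f)
    (fun x _ => f.differentiableAt) (fun x _ => ?_) convex_univ trivial trivial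
  have := h x
  rwa [pow_zero, one_mul, norm_iteratedFDeriv_one] at this

lemma sup_bd (z) : |f z| ≤ ⨆ z, |f z| := by
  apply le_ciSup (f := fun z => |f z|)
  refine ⟨SchwartzMap.seminorm ℝ 0 0 f, ?_⟩
  rintro _ ⟨z, rfl⟩
  exact f.norm_le_seminorm ℝ z

lemma l2 : Integrable (fun z => f z ^ 2) ∧
    ∫ z, f z ^ 2 = (eLpNorm (⇑f) 2 volume).toReal ^ 2 := by
  have h : MemLp (⇑f) 2 volume := f.memLp 2
  refine ⟨h.integrable_sq, ?_⟩
  rw [toReal_eLpNorm h.1, lpNorm_eq_integral_norm_rpow_toReal (by simp) (by simp) h.1]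
  have h0 : 0 ≤ ∫ z, f z ^ 2 := integral_nonneg fun _ => sq_nonneg _
  simp only [ENNReal.toReal_ofNat, Real.rpow_ofNat, Real.norm_eq_abs, sq_abs]
  rw [← Real.rpow_natCast, ← Real.rpow_mul h0]
  norm_num

lemma dInt (hn : 2 ≤ n) (x h : EuclideanSpace ℝ (Fin n)) :
    Integrable (fun y : EuclideanSpace ℝ (Fin n) =>
      |(f (x + h) - f x) - (f (x + y + h) - f (x + y))| ^ 2 / ‖y‖ ^ (n + 1)) := by
  obtain ⟨L, hL⟩ := lip f
  set M := ⨆ z, |f z|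
  have hM := sup_bd f
  have i1 := (radial1 n hn 1 one_pos).1.const_mul ((2 * L) ^ 2)
  have i2 := (radial3 n hn (n + 1) (by omega)).const_mul ((4 * M) ^ 2)
  refine (i1.add i2).mono' ?_ (ae_of_all _ fun w => ?_)
  · have := f.continuous
    have h1 : Measurable f := this.measurable
    apply Measurable.aestronglyMeasurable
    fun_prop
  · rw [Real.norm_of_nonneg (by positivity)]
    simp only [Pi.add_apply]
    rcases (norm_nonneg w).eq_or_lt with h0 | h0
    · have : w = 0 := norm_eq_zero.1 h0.symm
      simp [this]
    · rcases le_or_gt ‖w‖ 1 with h1 | h1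
      · rw [Set.indicator_of_mem (show ‖w‖ ∈ Set.Ioc (0:ℝ) 1 from ⟨h0, h1⟩),
          Set.indicator_of_notMem (by simpa using h1)]
        have ha : |(f (x + h) - f x) - (f (x + w + h) - f (x + w))| ≤ 2 * L * ‖w‖ := by
          have e1 := hL (x + h) (x + w + h)
          have e2 := hL (x + w) x
          rw [show x + h - (x + w + h) = -w by abel, norm_neg] at e1
          rw [show x + w - x = w by abel] at e2
          rw [abs_le] at *
          constructor <;> linarith
        have hb : |(f (x + h) - f x) - (f (x + w + h) - f (x + w))| ^ 2 ≤ (2 * L * ‖w‖) ^ 2 :=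
          pow_le_pow_left₀ (abs_nonneg _) ha 2
        calc _ ≤ (2 * L * ‖w‖) ^ 2 / ‖w‖ ^ (n + 1) := by gcongr
          _ = _ := by field_simp; ring
      · rw [Set.indicator_of_notMem (by simp [h1]),
          Set.indicator_of_mem (by simpa using h1)]
        have ha : |(f (x + h) - f x) - (f (x + w + h) - f (x + w))| ≤ 4 * M := by
          have e1 := hM (x + h)
          have e2 := hM x
          have e3 := hM (x + w + h)
          have e4 := hM (x + w)
          rw [abs_le] at *
          constructor <;> linarith
        have hb : |(f (x + h) - f x) - (f (x + w + h) - f (x + w))| ^ 2 ≤ (4 * M) ^ 2 :=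
          pow_le_pow_left₀ (abs_nonneg _) ha 2
        calc _ ≤ (4 * M) ^ 2 / ‖w‖ ^ (n + 1) := by gcongr
          _ = _ := by ring

lemma inner_bd (hn : 2 ≤ n) (x h : EuclideanSpace ℝ (Fin n)) (D : ℝ)
    (hD : D = ∫ y : EuclideanSpace ℝ (Fin n),
      |(f (x + h) - f x) - (f (x + y + h) - f (x + y))| ^ 2 / ‖y‖ ^ (n + 1)) :
    ‖∫ y in {y : EuclideanSpace ℝ (Fin n) | ‖x - y‖ ≤ 1},
            (((f (y + h) - f y) - (f (x + h) - f x)) / ‖x - y‖ ^ (n + 1)) • (x - y)‖ ≤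
      1 + kap n + 4 * (⨆ z, |f z|) * (kap n * max (Real.log D) 0) := by
  set M := ⨆ z, |f z|
  have hM := sup_bd f
  have hM0 : 0 ≤ M := (abs_nonneg _).trans (hM 0)
  have hD0 : 0 ≤ D := by rw [hD]; exact integral_nonneg fun _ => by positivity
  have hm : 1 ≤ max 1 D := le_max_left _ _
  have hm0 : 0 < max 1 D := by linarith
  obtain ⟨ρ, hρ⟩ : ∃ ρ, ρ = 1 / max 1 D := ⟨_, rfl⟩
  have hρ0 : 0 < ρ := by rw [hρ]; positivity
  have hρ1 : ρ ≤ 1 := by rw [hρ, div_le_one hm0]; exact hm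
  have hρD : ρ * D ≤ 1 := by
    rw [hρ, one_div_mul_eq_div, div_le_one hm0]; exact le_max_right _ _
  have hlog : Real.log (1 / ρ) ≤ max (Real.log D) 0 := by
    rw [hρ, one_div_one_div]
    rcases le_total 1 D with h1 | h1
    · rw [max_eq_right h1]; exact le_max_left _ _
    · rw [max_eq_left h1, Real.log_one]; exact le_max_right _ _
  obtain ⟨i1, v1⟩ := radial1 n hn ρ hρ0
  obtain ⟨i2, v2⟩ := radial2 n hn ρ hρ0 hρ1
  have i0 := dInt f hn x h
  set d : EuclideanSpace ℝ (Fin n) → ℝ := fun y =>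
      |(f (x + h) - f x) - (f (x + y + h) - f (x + y))| ^ 2 / ‖y‖ ^ (n + 1) with hd
  set R1 : EuclideanSpace ℝ (Fin n) → ℝ := fun w =>
      (Set.Ioc 0 ρ).indicator (fun r => r / r ^ n) ‖w‖ with hR1
  set R2 : EuclideanSpace ℝ (Fin n) → ℝ := fun w =>
      (Set.Ioc ρ 1).indicator (fun r => 1 / r ^ n) ‖w‖ with hR2
  have p0 : ∀ w, 0 ≤ d w := fun w => by simp only [hd]; positivity
  have p1 : ∀ w, 0 ≤ R1 w := fun w => Set.indicator_nonneg (fun r hr => by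
    have : 0 < r := hr.1
    positivity) _
  have p2 : ∀ w, 0 ≤ R2 w := fun w => Set.indicator_nonneg (fun r hr => by
    have : 0 < r := hρ0.trans hr.1
    positivity) _
  let G : EuclideanSpace ℝ (Fin n) → ℝ := fun w => (ρ * d w + ρ⁻¹ * R1 w) + 4 * M * R2 w
  have iG : Integrable G := ((i0.const_mul ρ).add (i1.const_mul _)).add (i2.const_mul _)
  have pG : ∀ w, 0 ≤ G w := fun w => by
    have := p0 w
    have := p1 w
    have := p2 w
    simp only [G]; positivity
  have vG : ∫ w, G w = ρ * D + kap n + 4 * M * (kap n * Real.log (1 / ρ)) := by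
    have i01 : Integrable (fun w => ρ * d w + ρ⁻¹ * R1 w) :=
      (i0.const_mul ρ).add (i1.const_mul _)
    simp only [G]
    rw [integral_add i01 (i2.const_mul _),
      integral_add (i0.const_mul ρ) (i1.const_mul _), integral_const_mul, integral_const_mul,
      integral_const_mul, v1, v2, ← hD]
    field_simp
  have step : ∀ y, ‖x - y‖ ≤ 1 →
      ‖(((f (y + h) - f y) - (f (x + h) - f x)) / ‖x - y‖ ^ (n + 1)) • (x - y)‖ ≤ G (y - x) := by
    intro y hy
    rcases (norm_nonneg (x - y)).eq_or_lt with h0 | h0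
    · have : x - y = 0 := norm_eq_zero.1 h0.symm
      rw [this, smul_zero, norm_zero]; exact pG _
    · have hdv : d (y - x) =
          |(f (y + h) - f y) - (f (x + h) - f x)| ^ 2 / ‖x - y‖ ^ (n + 1) := by
        simp only [hd]
        rw [show x + (y - x) = y by abel, norm_sub_rev y x, abs_sub_comm]
      have h4 : |(f (y + h) - f y) - (f (x + h) - f x)| ≤ 4 * M := by
        have e1 := hM (x + h)
        have e2 := hM x
        have e3 := hM (y + h)
        have e4 := hM y
        rw [abs_le] at *
        constructor <;> linarith
      have hp := p0 (y - x)
      simp only [G]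
      rw [norm_smul, norm_div, norm_pow, norm_norm, Real.norm_eq_abs]
      rw [hdv] at hp ⊢
      simp only [hR1, hR2, norm_sub_rev y x]
      set a := |(f (y + h) - f y) - (f (x + h) - f x)|
      generalize ‖x - y‖ = r at *
      have e : a / r ^ (n + 1) * r = a / r ^ n := by
        field_simp
        ring
      rw [e]
      rcases le_or_gt r ρ with h1 | h1
      · rw [Set.indicator_of_mem (show r ∈ Set.Ioc (0:ℝ) ρ from ⟨h0, h1⟩),
          Set.indicator_of_notMem (by simp [h1])]
        have : ρ * (a ^ 2 / r ^ (n + 1)) + ρ⁻¹ * (r / r ^ n) + 4 * M * 0 - a / r ^ n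
          = ((ρ * a - r) ^ 2 + ρ * a * r) / (ρ * r * r ^ n) := by
          field_simp
          ring
        have h5 : 0 ≤ ((ρ * a - r) ^ 2 + ρ * a * r) / (ρ * r * r ^ n) := by positivity
        linarith
      · rw [Set.indicator_of_notMem (by simp [h1]),
          Set.indicator_of_mem (show r ∈ Set.Ioc ρ 1 from ⟨h1, hy⟩)]
        have h5 : a / r ^ n ≤ 4 * M * (1 / r ^ n) := by
          rw [mul_one_div]; gcongr
        have h6 : 0 ≤ ρ * (a ^ 2 / r ^ (n + 1)) := by positivity
        linarith
  have iGx : Integrable (fun y => G (y - x)) := iG.comp_sub_right x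
  have hset : MeasurableSet {y : EuclideanSpace ℝ (Fin n) | ‖x - y‖ ≤ 1} :=
    measurableSet_le (by fun_prop) (by fun_prop)
  calc _ ≤ ∫ y in {y : EuclideanSpace ℝ (Fin n) | ‖x - y‖ ≤ 1}, G (y - x) :=
        norm_integral_le_of_norm_le iGx.integrableOn
          ((ae_restrict_iff' hset).2 (ae_of_all _ step))
    _ ≤ ∫ y, G (y - x) := setIntegral_le_integral iGx (ae_of_all _ fun y => pG _)
    _ = ∫ y, G y := integral_sub_right_eq_self G x
    _ ≤ _ := by
      rw [vG]
      have := kap_nonneg n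
      gcongr

lemma outer_bd (hn : 2 ≤ n) (x h : EuclideanSpace ℝ (Fin n)) (J : ℝ)
    (hJ : J = ∫ w : EuclideanSpace ℝ (Fin n),
      (Set.Ioi 1).indicator (fun r : ℝ => 1 / r ^ (2 * n)) ‖w‖) :
    ‖∫ y in {y : EuclideanSpace ℝ (Fin n) | 1 < ‖x - y‖},
            ((f (y + h) - f y) / ‖x - y‖ ^ (n + 1)) • (x - y)‖ ≤
      4 * (eLpNorm (⇑f) 2 volume).toReal + ((eLpNorm (⇑f) 2 volume).toReal + 1) * J := by
  obtain ⟨i0, v0⟩ := l2 f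
  have hN : 0 ≤ (eLpNorm (⇑f) 2 volume).toReal := ENNReal.toReal_nonneg
  set N := (eLpNorm (⇑f) 2 volume).toReal
  have i3 := radial3 n hn (2 * n) (by omega)
  set R : EuclideanSpace ℝ (Fin n) → ℝ := fun w =>
      (Set.Ioi 1).indicator (fun r : ℝ => 1 / r ^ (2 * n)) ‖w‖ with hR
  have pR : ∀ w, 0 ≤ R w := fun w => Set.indicator_nonneg (fun r hr => by
    have : 0 < r := one_pos.trans hr
    positivity) _
  have ih : Integrable (fun y => f (y + h) ^ 2) := i0.comp_add_right h
  have vh : ∫ y, f (y + h) ^ 2 = N ^ 2 := by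
    rw [← v0]; exact integral_add_right_eq_self (fun y => f y ^ 2) h
  have iRx : Integrable (fun y => R (y - x)) := i3.comp_sub_right x
  have vRx : ∫ y, R (y - x) = J := by
    rw [hJ]; exact integral_sub_right_eq_self R x
  let G : EuclideanSpace ℝ (Fin n) → ℝ := fun y =>
    (2 / (N + 1)) * (f (y + h) ^ 2 + f y ^ 2) + (N + 1) * R (y - x)
  have iG : Integrable G := ((ih.add i0).const_mul _).add (iRx.const_mul _)
  have pG : ∀ w, 0 ≤ G w := fun w => by
    have := pR (w - x)
    simp only [G]; positivity
  have vG : ∫ w, G w = (2 / (N + 1)) * (N ^ 2 + N ^ 2) + (N + 1) * J := by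
    have i01 : Integrable (fun y => (2 / (N + 1)) * (f (y + h) ^ 2 + f y ^ 2)) :=
      (ih.add i0).const_mul _
    simp only [G]
    rw [integral_add i01 (iRx.const_mul _), integral_const_mul,
      integral_const_mul, integral_add ih i0, vh, v0, vRx]
  have step : ∀ y, 1 < ‖x - y‖ →
      ‖((f (y + h) - f y) / ‖x - y‖ ^ (n + 1)) • (x - y)‖ ≤ G y := by
    intro y hy
    simp only [G]
    rw [norm_smul, norm_div, norm_pow, norm_norm, Real.norm_eq_abs]
    simp only [hR, norm_sub_rev y x]
    generalize ‖x - y‖ = r at *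
    have h0 : 0 < r := one_pos.trans hy
    rw [Set.indicator_of_mem (by simpa using hy)]
    have e : |f (y + h) - f y| / r ^ (n + 1) * r = |f (y + h) - f y| * (1 / r ^ n) := by
      field_simp
      ring
    rw [e, pow_mul', show (1 : ℝ) / (r ^ n) ^ 2 = (1 / r ^ n) ^ 2 by rw [one_div_pow]]
    have hs : |f (y + h) - f y| ^ 2 ≤ 2 * (f (y + h) ^ 2 + f y ^ 2) := by
      rw [sq_abs]; nlinarith [sq_nonneg (f (y + h) + f y)]
    have hb : 0 ≤ 1 / r ^ n := by positivity
    generalize 1 / r ^ n = b at *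
    have ha := abs_nonneg (f (y + h) - f y)
    generalize |f (y + h) - f y| = a at *
    have h1 : 0 < N + 1 := by linarith
    have h2 : a ^ 2 / (N + 1) ≤ 2 / (N + 1) * (f (y + h) ^ 2 + f y ^ 2) := by
      rw [div_mul_eq_mul_div]; gcongr
    have h3 : a ^ 2 / (N + 1) + (N + 1) * b ^ 2 - a * b
        = ((a - (N + 1) * b) ^ 2 + (N + 1) * a * b) / (N + 1) := by
      field_simp
      ring
    have h4 : 0 ≤ ((a - (N + 1) * b) ^ 2 + (N + 1) * a * b) / (N + 1) := by positivity
    linarith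
  have hset : MeasurableSet {y : EuclideanSpace ℝ (Fin n) | 1 < ‖x - y‖} :=
    measurableSet_lt (by fun_prop) (by fun_prop)
  calc _ ≤ ∫ y in {y : EuclideanSpace ℝ (Fin n) | 1 < ‖x - y‖}, G y :=
        norm_integral_le_of_norm_le iG.integrableOn
          ((ae_restrict_iff' hset).2 (ae_of_all _ step))
    _ ≤ ∫ y, G y := setIntegral_le_integral iG (ae_of_all _ fun y => pG _)
    _ ≤ _ := by
      rw [vG]
      refine add_le_add ?_ le_rfl
      rw [div_mul_eq_mul_div, div_le_iff₀ (by linarith)]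
      nlinarith

end VelLog



/-- Logarithmic bound for the finite difference of the velocity in the case `α = 1/2`:
`|δ_h u(x)| ≤ C (1 + ‖f‖_∞ · ln⁺ D₁(δ_h f)(x) + ‖f‖_{L²})`. -/
theorem velocity_difference_log_bound (n : ℕ) (hn : 2 ≤ n) :
    ∃ C > (0 : ℝ), ∀ (f : SchwartzMap (EuclideanSpace ℝ (Fin n)) ℝ)
      (x h : EuclideanSpace ℝ (Fin n)),
      ‖(∫ y in {y : EuclideanSpace ℝ (Fin n) | ‖x - y‖ ≤ 1},
            (((f (y + h) - f y) - (f (x + h) - f x)) / ‖x - y‖ ^ ((n : ℝ) + 1)) • (x - y)) +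
          ∫ y in {y : EuclideanSpace ℝ (Fin n) | 1 < ‖x - y‖},
            ((f (y + h) - f y) / ‖x - y‖ ^ ((n : ℝ) + 1)) • (x - y)‖ ≤
        C * (1 + (⨆ z : EuclideanSpace ℝ (Fin n), |f z|) *
              max (Real.log (∫ y : EuclideanSpace ℝ (Fin n),
                |(f (x + h) - f x) - (f (x + y + h) - f (x + y))| ^ 2 / ‖y‖ ^ ((n : ℝ) + 1))) 0
            + (eLpNorm (⇑f) 2 volume).toReal) := by

  have hk := VelLog.kap_nonneg n
  obtain ⟨J, hJ⟩ : ∃ J : ℝ, J = ∫ w : EuclideanSpace ℝ (Fin n),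
      (Set.Ioi 1).indicator (fun r : ℝ => 1 / r ^ (2 * n)) ‖w‖ := ⟨_, rfl⟩
  have hJ0 : 0 ≤ J := by
    rw [hJ]
    exact integral_nonneg fun w => Set.indicator_nonneg (fun r hr => by
      have : 0 < r := one_pos.trans hr
      positivity) _
  refine ⟨5 + 4 * VelLog.kap n + J, by positivity, fun f x h => ?_⟩
  have hr : ∀ r : ℝ, r ^ ((n : ℝ) + 1) = r ^ (n + 1) := fun r => by
    rw [← Real.rpow_natCast]; push_cast; rfl
  simp only [hr]
  have hi := VelLog.inner_bd f hn x h _ rfl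
  have ho := VelLog.outer_bd f hn x h J hJ
  refine (norm_add_le _ _).trans ((add_le_add hi ho).trans ?_)
  have hN : 0 ≤ (eLpNorm (⇑f) 2 volume).toReal := ENNReal.toReal_nonneg
  have hM0 : 0 ≤ ⨆ z, |f z| := (abs_nonneg _).trans (VelLog.sup_bd f 0)
  have hl := le_max_right (Real.log (∫ y : EuclideanSpace ℝ (Fin n),
      |(f (x + h) - f x) - (f (x + y + h) - f (x + y))| ^ 2 / ‖y‖ ^ (n + 1))) 0
  generalize (max (Real.log (∫ y : EuclideanSpace ℝ (Fin n),
      |(f (x + h) - f x) - (f (x + y + h) - f (x + y))| ^ 2 / ‖y‖ ^ (n + 1))) 0) = l at *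
  generalize (eLpNorm (⇑f) 2 volume).toReal = N at *
  generalize (⨆ z, |f z|) = M at *
  have h1 := mul_nonneg hM0 hl
  have h2 := mul_nonneg hk hN
  have h3 := mul_nonneg hJ0 h1
  nlinarith
end

section
/- Let n ≥ 2, α ∈ (0, 1/2], γ ∈ (0, 2α) and β ∈ (2α − γ, 2α). There exists a constant C > 0, depending only on n, γ and β, such that for every Schwartz function f : ℝⁿ → ℝ, every η ≥ 0, and all x, h ∈ ℝⁿ with h ≠ 0, setting ϑ(x,h) := (f(x+h) − f(x)) / (η² + |h|²)^{β/2} and M := sup_{x,h ∈ ℝⁿ} |ϑ(x,h)|, one has C · |h|^γ · M^{γ/(1−β)} · ∫_{ℝⁿ} |δ_h f(x) − δ_h f(x+y)|² / |y|^{n+γ} dy ≥ (η² + |h|²)^β · |ϑ(x,h)|^{2 + γ/(1−β)}. -/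
open MeasureTheory

lemma wd_schwartz_bound {n : ℕ} (f : SchwartzMap (EuclideanSpace ℝ (Fin n)) ℝ) :
    ∃ K : ℝ, 0 ≤ K ∧ ∀ x y, |f y - f x| ≤ K * min ‖y - x‖ 1 := by
  set A := SchwartzMap.seminorm ℝ 0 0 f with hA
  set B := SchwartzMap.seminorm ℝ 0 1 f with hB
  have hA0 : 0 ≤ A := apply_nonneg _ _
  have hB0 : 0 ≤ B := apply_nonneg _ _
  refine ⟨2 * A + B, by positivity, fun x y => ?_⟩
  have h1 : ∀ z, |f z| ≤ A := fun z => by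
    simpa using SchwartzMap.norm_le_seminorm ℝ f z
  have h2 : |f y - f x| ≤ B * ‖y - x‖ := by
    have := Convex.norm_image_sub_le_of_norm_fderiv_le (𝕜 := ℝ) (f := f) (s := Set.univ) (C := B)
      (x := x) (y := y)
      (fun z _ => f.differentiableAt) (fun z _ => by
        have := SchwartzMap.norm_iteratedFDeriv_le_seminorm ℝ f 1 z
        rwa [norm_iteratedFDeriv_one] at this)
      convex_univ (Set.mem_univ _) (Set.mem_univ _)
    simpa using this
  have h3 : |f y - f x| ≤ 2 * A := by
    have := abs_sub (f y) (f x)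
    linarith [h1 x, h1 y]
  rcases min_cases ‖y - x‖ 1 with ⟨h, _⟩ | ⟨h, _⟩ <;> rw [h]
  · nlinarith [norm_nonneg (y - x)]
  · linarith

lemma wd_integrable {n : ℕ} (hn : 2 ≤ n) {γ : ℝ} (hγ : 0 < γ) (hγ2 : γ < 2)
    (g : EuclideanSpace ℝ (Fin n) → ℝ) (hg : Continuous g) (K : ℝ)
    (hK : ∀ y, |g y| ≤ K * min ‖y‖ 1) :
    Integrable (fun y => |g y| ^ 2 / ‖y‖ ^ ((n : ℝ) + γ)) := by
  have : Nontrivial (EuclideanSpace ℝ (Fin n)) := by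
    apply Module.nontrivial_of_finrank_pos (R := ℝ)
    simp; omega
  have key : Integrable (fun y : EuclideanSpace ℝ (Fin n) =>
      (fun r : ℝ => (min r 1) ^ 2 / r ^ ((n : ℝ) + γ)) ‖y‖) := by
    rw [integrable_fun_norm_addHaar volume (f := fun r : ℝ => (min r 1) ^ 2 / r ^ ((n : ℝ) + γ))]
    rw [finrank_euclideanSpace_fin]
    have hp : ∀ r : ℝ, 0 < r → r ^ (n - 1) / r ^ ((n : ℝ) + γ) = r ^ (-1 - γ) := fun r hr => by
      rw [← Real.rpow_natCast, ← Real.rpow_sub hr]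
      congr 1
      rw [Nat.cast_sub (by omega)]; push_cast; ring
    rw [← Set.Ioo_union_Ici_eq_Ioi (zero_lt_one' ℝ)]
    refine IntegrableOn.union ?_ ?_
    · refine ((intervalIntegral.integrableOn_Ioo_rpow_iff (s := 1 - γ) one_pos).2
        (by linarith)).congr_fun ?_ measurableSet_Ioo
      intro r hr
      simp only [smul_eq_mul]
      rw [min_eq_left hr.2.le, ← mul_div_assoc, mul_comm, mul_div_assoc, hp r hr.1,
        ← Real.rpow_natCast, ← Real.rpow_add hr.1]
      congr 1; push_cast; ring
    · rw [integrableOn_Ici_iff_integrableOn_Ioi]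
      refine (integrableOn_Ioi_rpow_of_lt (a := -1 - γ) (by linarith) one_pos).congr_fun ?_
        measurableSet_Ioi
      intro r hr
      have hr' : (1:ℝ) < r := hr
      simp only [smul_eq_mul]
      rw [min_eq_right hr'.le, ← mul_div_assoc, one_pow, mul_one, hp r (by linarith)]
  refine (key.const_mul (K ^ 2)).mono' ?_ ?_
  · refine Measurable.aestronglyMeasurable ?_
    have := hg.measurable
    fun_prop
  · refine Filter.Eventually.of_forall fun y => ?_
    rw [Real.norm_of_nonneg (by positivity), ← mul_div_assoc, ← mul_pow]
    have := hK y
    gcongr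

lemma wd_core {n : ℕ} (hn : 2 ≤ n) {γ : ℝ} (hγ : 0 < γ)
    (f : EuclideanSpace ℝ (Fin n) → ℝ) (x h : EuclideanSpace ℝ (Fin n)) (N : ℕ) (hN : 1 ≤ N)
    (hh : h ≠ 0)
    (hint : Integrable (fun y => |(f (x + h) - f x) - (f (x + y + h) - f (x + y))| ^ 2
      / ‖y‖ ^ ((n : ℝ) + γ)))
    (hT : ∀ z, |f (z + (N : ℝ) • h) - f z| ≤ N * (|f (x + h) - f x| / 2)) :
    (f (x + h) - f x) ^ 2 / 4 * (volume.real (Metric.ball (0 : EuclideanSpace ℝ (Fin n)) 1)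
        * ((N : ℝ) * ‖h‖) ^ n) ≤
      (2 * (N * ‖h‖)) ^ ((n : ℝ) + γ) *
        ∫ y, |(f (x + h) - f x) - (f (x + y + h) - f (x + y))| ^ 2 / ‖y‖ ^ ((n : ℝ) + γ) := by
  have : Nontrivial (EuclideanSpace ℝ (Fin n)) := by
    apply Module.nontrivial_of_finrank_pos (R := ℝ)
    simp; omega
  set d := f (x + h) - f x with hd
  set F : EuclideanSpace ℝ (Fin n) → ℝ :=
    fun y => |d - (f (x + y + h) - f (x + y))| ^ 2 / ‖y‖ ^ ((n : ℝ) + γ) with hF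
  set R : ℝ := N * ‖h‖ with hR
  have hN0 : (0 : ℝ) < N := by exact_mod_cast hN
  have hh0 : 0 < ‖h‖ := norm_pos_iff.2 hh
  have hR0 : 0 < R := by positivity
  have hF0 : ∀ y, 0 ≤ F y := fun y => by positivity
  have hG : ∀ y, ‖y‖ ≤ 2 * R →
      (d - (f (x + y + h) - f (x + y))) ^ 2 ≤ (2 * R) ^ ((n : ℝ) + γ) * F y := by
    intro y hy
    rcases eq_or_ne y 0 with rfl | hy0
    · have : (d - (f (x + 0 + h) - f (x + 0))) = 0 := by simp [hd]
      rw [this]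
      have h0 := hF0 0
      have h1 : 0 ≤ (2 * R) ^ ((n : ℝ) + γ) := by positivity
      nlinarith [mul_nonneg h1 h0]
    · have hy1 : 0 < ‖y‖ := norm_pos_iff.2 hy0
      have h1 : ‖y‖ ^ ((n : ℝ) + γ) ≤ (2 * R) ^ ((n : ℝ) + γ) := by gcongr
      calc (d - (f (x + y + h) - f (x + y))) ^ 2 = ‖y‖ ^ ((n : ℝ) + γ) * F y := by
            simp only [hF, sq_abs]
            field_simp
        _ ≤ _ := by gcongr
  have hpt : ∀ y ∈ Metric.ball (0 : EuclideanSpace ℝ (Fin n)) R,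
      N * (d ^ 2 / 4) ≤ ∑ k ∈ Finset.range N,
        (2 * R) ^ ((n : ℝ) + γ) * F (y + (k : ℝ) • h) := by
    intro y hy
    rw [mem_ball_zero_iff] at hy
    have h1 : ∑ k ∈ Finset.range N,
        (d - (f (x + (y + (k : ℝ) • h) + h) - f (x + (y + (k : ℝ) • h)))) ^ 2 ≤
        ∑ k ∈ Finset.range N, (2 * R) ^ ((n : ℝ) + γ) * F (y + (k : ℝ) • h) := by
      refine Finset.sum_le_sum fun k hk => hG _ ?_
      have hk' : (k : ℝ) ≤ N := by exact_mod_cast (Finset.mem_range.1 hk).le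
      calc ‖y + (k : ℝ) • h‖ ≤ ‖y‖ + ‖(k : ℝ) • h‖ := norm_add_le _ _
        _ = ‖y‖ + k * ‖h‖ := by rw [norm_smul]; simp
        _ ≤ R + N * ‖h‖ := by gcongr
        _ = 2 * R := by rw [hR]; ring
    refine le_trans ?_ h1
    have h2 := sq_sum_le_card_mul_sum_sq (s := Finset.range N)
      (f := fun k : ℕ => d - (f (x + (y + (k : ℝ) • h) + h) - f (x + (y + (k : ℝ) • h))))
    have h3 : ∑ k ∈ Finset.range N,
        (d - (f (x + (y + (k : ℝ) • h) + h) - f (x + (y + (k : ℝ) • h)))) =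
        N * d - (f ((x + y) + (N : ℝ) • h) - f (x + y)) := by
      rw [Finset.sum_sub_distrib]
      congr 1
      · simp
      · have := Finset.sum_range_sub (fun k : ℕ => f ((x + y) + (k : ℝ) • h)) N
        simp only [Nat.cast_zero, zero_smul, add_zero] at this
        rw [← this]
        refine Finset.sum_congr rfl fun k _ => ?_
        congr 2
        · push_cast; rw [add_smul, one_smul]; abel
        · abel
    rw [h3, Finset.card_range] at h2
    have h4 := hT (x + y)
    set T := f ((x + y) + (N : ℝ) • h) - f (x + y)
    have h5 : (N * d / 2) ^ 2 ≤ (N * d - T) ^ 2 := by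
      apply sq_le_sq.2
      have h6 := abs_sub_abs_le_abs_sub (N * d) T
      rw [abs_mul, abs_of_pos hN0] at h6
      rw [abs_div, abs_mul, abs_of_pos hN0, abs_of_pos (two_pos (α := ℝ))]
      linarith
    have h7 := h5.trans h2
    have : N * (N * (d ^ 2 / 4)) ≤ (N : ℝ) * ∑ k ∈ Finset.range N,
        (d - (f (x + (y + (k : ℝ) • h) + h) - f (x + (y + (k : ℝ) • h)))) ^ 2 := by
      refine le_trans (le_of_eq ?_) h7
      ring
    exact le_of_mul_le_mul_left this hN0
  have hintk : ∀ k : ℕ, Integrable (fun y => (2 * R) ^ ((n : ℝ) + γ) * F (y + (k : ℝ) • h)) :=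
    fun k => (hint.comp_add_right ((k : ℝ) • h)).const_mul _
  have hvol : volume.real (Metric.ball (0 : EuclideanSpace ℝ (Fin n)) R) =
      volume.real (Metric.ball (0 : EuclideanSpace ℝ (Fin n)) 1) * R ^ n := by
    rw [measureReal_def, Measure.addHaar_ball _ _ hR0.le, finrank_euclideanSpace_fin,
      ENNReal.toReal_mul, ENNReal.toReal_ofReal (by positivity), mul_comm, measureReal_def]
  have hfin : (N : ℝ) * (d ^ 2 / 4 * volume.real (Metric.ball (0 : EuclideanSpace ℝ (Fin n)) R))
      ≤ N * ((2 * R) ^ ((n : ℝ) + γ) * ∫ y, F y) := by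
    calc (N : ℝ) * (d ^ 2 / 4 * volume.real (Metric.ball (0 : EuclideanSpace ℝ (Fin n)) R))
        = ∫ y in Metric.ball (0 : EuclideanSpace ℝ (Fin n)) R, N * (d ^ 2 / 4) := by
          rw [setIntegral_const, smul_eq_mul]; ring
      _ ≤ ∫ y in Metric.ball (0 : EuclideanSpace ℝ (Fin n)) R,
            ∑ k ∈ Finset.range N, (2 * R) ^ ((n : ℝ) + γ) * F (y + (k : ℝ) • h) := by
          refine setIntegral_mono_on ?_ ?_ measurableSet_ball hpt
          · exact integrableOn_const measure_ball_lt_top.ne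
          · exact (integrable_finsetSum _ fun k _ => hintk k).integrableOn
      _ ≤ ∫ y, ∑ k ∈ Finset.range N, (2 * R) ^ ((n : ℝ) + γ) * F (y + (k : ℝ) • h) := by
          refine setIntegral_le_integral (integrable_finsetSum _ fun k _ => hintk k) ?_
          refine Filter.Eventually.of_forall fun y => ?_
          refine Finset.sum_nonneg fun k _ => ?_
          have := hF0 (y + (k : ℝ) • h)
          positivity
      _ = _ := by
          rw [integral_finsetSum _ fun k _ => hintk k]
          simp only [integral_const_mul]
          rw [Finset.sum_congr rfl fun k _ => by
            rw [integral_add_right_eq_self F ((k : ℝ) • h)]]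
          simp
  rw [← hvol]
  exact le_of_mul_le_mul_left hfin hN0

set_option maxHeartbeats 2000000 in
/-- Weighted nonlinear lower bound for finite differences: with
`ϑ(x,h) = δ_h f(x)/(η²+|h|²)^{β/2}` and `M = sup |ϑ|`, one has
`D_γ(δ_h f)(x)/(η²+|h|²)^β ≥ (|ϑ|/M)^{γ/(1−β)} |ϑ|² / (C |h|^γ)`, the constant `C`
depending only on `n`, `γ` and `β`. -/
theorem weighted_difference_lower_bound (n : ℕ) (hn : 2 ≤ n) (γ β : ℝ)
    (hγ : 0 < γ) (hβ : 0 < β) :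
    ∃ C > (0 : ℝ), ∀ (α : ℝ), 0 < α → α ≤ 1 / 2 → γ < 2 * α → 2 * α - γ < β → β < 2 * α →
      ∀ (f : SchwartzMap (EuclideanSpace ℝ (Fin n)) ℝ) (η : ℝ), 0 ≤ η →
      ∀ (x h : EuclideanSpace ℝ (Fin n)), h ≠ 0 →
      C * ‖h‖ ^ γ *
          (⨆ p : EuclideanSpace ℝ (Fin n) × EuclideanSpace ℝ (Fin n),
            |(f (p.1 + p.2) - f p.1) / (η ^ 2 + ‖p.2‖ ^ 2) ^ (β / 2)|) ^ (γ / (1 - β)) *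
          ∫ y : EuclideanSpace ℝ (Fin n),
            |(f (x + h) - f x) - (f (x + y + h) - f (x + y))| ^ 2 / ‖y‖ ^ ((n : ℝ) + γ) ≥
        (η ^ 2 + ‖h‖ ^ 2) ^ β *
          |(f (x + h) - f x) / (η ^ 2 + ‖h‖ ^ 2) ^ (β / 2)| ^ (2 + γ / (1 - β)) := by
  set ω := volume.real (Metric.ball (0 : EuclideanSpace ℝ (Fin n)) 1) with hω
  have hω0 : 0 < ω :=
    ENNReal.toReal_pos (Metric.measure_ball_pos _ _ one_pos).ne' measure_ball_lt_top.ne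
  refine ⟨4 / ω * 2 ^ ((n : ℝ) + γ) * 2 ^ γ * 2 ^ (γ / (1 - β)), by positivity, ?_⟩
  intro α hα hα2 hγα _ hβα f η hη x h hh
  have hβ1 : 0 < 1 - β := by linarith
  have hγ2 : γ < 2 := by linarith
  have hh0 : 0 < ‖h‖ := norm_pos_iff.2 hh
  obtain ⟨K, hK0, hK⟩ := wd_schwartz_bound f
  have hbdd : BddAbove (Set.range
      (fun p : EuclideanSpace ℝ (Fin n) × EuclideanSpace ℝ (Fin n) =>
        |(f (p.1 + p.2) - f p.1) / (η ^ 2 + ‖p.2‖ ^ 2) ^ (β / 2)|)) := by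
    refine ⟨K, ?_⟩
    rintro _ ⟨⟨z, k⟩, rfl⟩
    simp only
    rcases eq_or_ne k 0 with rfl | hk
    · simpa using hK0
    have hk0 : 0 < ‖k‖ := norm_pos_iff.2 hk
    have hden : 0 < (η ^ 2 + ‖k‖ ^ 2) ^ (β / 2) := by positivity
    rw [abs_div, abs_of_pos hden, div_le_iff₀ hden]
    refine (hK z (z + k)).trans ?_
    rw [add_sub_cancel_left]
    refine mul_le_mul_of_nonneg_left ?_ hK0
    have h1 : ‖k‖ ^ β ≤ (η ^ 2 + ‖k‖ ^ 2) ^ (β / 2) := by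
      calc ‖k‖ ^ β = (‖k‖ ^ 2) ^ (β / 2) := by
            rw [← Real.rpow_natCast, ← Real.rpow_mul hk0.le]; congr 1; push_cast; ring
        _ ≤ _ := by
            apply Real.rpow_le_rpow (by positivity) _ (by positivity)
            nlinarith [sq_nonneg η]
    refine le_trans ?_ h1
    rcases le_total ‖k‖ 1 with hk1 | hk1
    · refine (min_le_left _ _).trans ?_
      exact Real.self_le_rpow_of_le_one hk0.le hk1 (by linarith)
    · exact (min_le_right _ _).trans (Real.one_le_rpow hk1 hβ.le)
  set M := ⨆ p : EuclideanSpace ℝ (Fin n) × EuclideanSpace ℝ (Fin n),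
            |(f (p.1 + p.2) - f p.1) / (η ^ 2 + ‖p.2‖ ^ 2) ^ (β / 2)| with hM
  have hle : ∀ z k, |(f (z + k) - f z) / (η ^ 2 + ‖k‖ ^ 2) ^ (β / 2)| ≤ M :=
    fun z k => le_ciSup hbdd (z, k)
  clear_value M
  have hint : Integrable (fun y => |(f (x + h) - f x) - (f (x + y + h) - f (x + y))| ^ 2
      / ‖y‖ ^ ((n : ℝ) + γ)) := by
    refine wd_integrable hn hγ hγ2
      (fun y => (f (x + h) - f x) - (f (x + y + h) - f (x + y))) ?_ (2 * K) ?_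
    · have := f.continuous
      fun_prop
    · intro y
      have h1 := hK (x + y + h) (x + h)
      have h2 := hK x (x + y)
      have e1 : ‖x + h - (x + y + h)‖ = ‖y‖ := by
        rw [← norm_neg]; congr 1; abel
      rw [e1] at h1
      rw [add_sub_cancel_left] at h2
      calc |(f (x + h) - f x) - (f (x + y + h) - f (x + y))|
          = |(f (x + h) - f (x + y + h)) + (f (x + y) - f x)| := by congr 1; ring
        _ ≤ _ := abs_add_le _ _
        _ ≤ 2 * K * min ‖y‖ 1 := by linarith
  have hcore := fun N hN => wd_core hn hγ f x h N hN hh hint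
  set D := ∫ y, |(f (x + h) - f x) - (f (x + y + h) - f (x + y))| ^ 2
      / ‖y‖ ^ ((n : ℝ) + γ) with hD
  have hD0 : 0 ≤ D := integral_nonneg fun y => by positivity
  clear_value D ω
  set d := f (x + h) - f x with hd
  set w := η ^ 2 + ‖h‖ ^ 2 with hw
  have hw0 : 0 < w := by positivity
  set s := w ^ (β / 2) with hs
  have hs0 : 0 < s := by positivity
  have hss : w ^ β = s ^ 2 := by
    rw [hs, ← Real.rpow_natCast, ← Real.rpow_mul hw0.le]; congr 1; push_cast; ring
  set t := |d / s| with ht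
  have htM : t ≤ M := hle x h
  have ht0 : 0 ≤ t := abs_nonneg _
  clear_value t s w
  have hdt : |d| = t * s := by
    rw [ht, abs_div, abs_of_pos hs0]; field_simp
  set q := γ / (1 - β) with hq
  have hq0 : 0 < q := by positivity
  clear_value q
  rcases ht0.eq_or_lt with h0 | htpos
  · rw [← h0, Real.zero_rpow (by positivity), mul_zero]
    have : 0 ≤ M := ht0.trans htM
    positivity
  have hM0 : 0 < M := htpos.trans_le htM
  set L := (2 * M / t) ^ (1 / (1 - β)) with hL
  have hL1 : 1 ≤ L := by
    apply Real.one_le_rpow _ (by positivity)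
    rw [le_div_iff₀ htpos]; linarith
  clear_value L
  set N := ⌈L⌉₊ with hN
  have hLN : L ≤ N := Nat.le_ceil L
  have hN1 : (1 : ℝ) ≤ N := hL1.trans hLN
  have hN1' : 1 ≤ N := by exact_mod_cast hN1
  have hN0 : (0 : ℝ) < N := by linarith
  have hNL : (N : ℝ) ≤ 2 * L := by
    have := Nat.ceil_lt_add_one (by linarith : 0 ≤ L)
    linarith
  clear_value N
  have hpow : 2 * M / t ≤ (N : ℝ) ^ (1 - β) := by
    calc 2 * M / t = L ^ (1 - β) := by
          rw [hL, ← Real.rpow_mul (by positivity), one_div_mul_cancel hβ1.ne', Real.rpow_one]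
      _ ≤ _ := by gcongr
  have hT : ∀ z, |f (z + (N : ℝ) • h) - f z| ≤ N * (|d| / 2) := by
    intro z
    have h1 := hle z ((N : ℝ) • h)
    have e1 : ‖(N : ℝ) • h‖ = N * ‖h‖ := by rw [norm_smul]; simp
    rw [e1] at h1
    have hden : 0 < (η ^ 2 + (N * ‖h‖) ^ 2) ^ (β / 2) := by positivity
    rw [abs_div, abs_of_pos hden, div_le_iff₀ hden] at h1
    have h2 : (η ^ 2 + (N * ‖h‖) ^ 2) ^ (β / 2) ≤ (N : ℝ) ^ β * s := by
      calc (η ^ 2 + (N * ‖h‖) ^ 2) ^ (β / 2) ≤ ((N : ℝ) ^ 2 * w) ^ (β / 2) := by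
            apply Real.rpow_le_rpow (by positivity) _ (by positivity)
            have : 1 ≤ (N : ℝ) ^ 2 := one_le_pow₀ hN1
            rw [hw]
            nlinarith [sq_nonneg η]
        _ = (N : ℝ) ^ β * s := by
            rw [Real.mul_rpow (by positivity) hw0.le, ← Real.rpow_natCast,
              ← Real.rpow_mul hN0.le, hs]
            congr 2; push_cast; ring
    have h3 : (N : ℝ) ^ (1 - β) * (N : ℝ) ^ β = N := by
      rw [← Real.rpow_add hN0]; simp
    have h4 : M ≤ (N : ℝ) ^ (1 - β) * t / 2 := by
      rw [div_le_iff₀ htpos] at hpow; linarith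
    calc |f (z + (N : ℝ) • h) - f z| ≤ M * ((N : ℝ) ^ β * s) := h1.trans (by gcongr)
      _ ≤ ((N : ℝ) ^ (1 - β) * t / 2) * ((N : ℝ) ^ β * s) := by gcongr
      _ = ((N : ℝ) ^ (1 - β) * (N : ℝ) ^ β) * (t * s / 2) := by ring
      _ = N * (|d| / 2) := by rw [h3, hdt]
  have hc := hcore N hN1' hT
  have hR0 : 0 < (N : ℝ) * ‖h‖ := by positivity
  have hsplit : (2 * ((N : ℝ) * ‖h‖)) ^ ((n : ℝ) + γ) =
      2 ^ ((n : ℝ) + γ) * ((N : ℝ) * ‖h‖) ^ n * ((N : ℝ) ^ γ * ‖h‖ ^ γ) := by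
    rw [Real.mul_rpow (by positivity) hR0.le, Real.rpow_add hR0, Real.rpow_natCast,
      Real.mul_rpow hN0.le hh0.le]
    ring
  have hc2 : d ^ 2 ≤ 4 / ω * 2 ^ ((n : ℝ) + γ) * ((N : ℝ) ^ γ * ‖h‖ ^ γ) * D := by
    have hRn : 0 < ((N : ℝ) * ‖h‖) ^ n := by positivity
    rw [hsplit, ← hω] at hc
    have h1 : ((N : ℝ) * ‖h‖) ^ n * (d ^ 2 / 4 * ω) ≤ ((N : ℝ) * ‖h‖) ^ n *
        (2 ^ ((n : ℝ) + γ) * ((N : ℝ) ^ γ * ‖h‖ ^ γ) * D) := by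
      refine le_trans (le_of_eq ?_) (hc.trans (le_of_eq ?_)) <;> ring
    have h2 := le_of_mul_le_mul_left h1 hRn
    calc d ^ 2 = 4 / ω * (d ^ 2 / 4 * ω) := by field_simp
      _ ≤ 4 / ω * (2 ^ ((n : ℝ) + γ) * ((N : ℝ) ^ γ * ‖h‖ ^ γ) * D) := by gcongr
      _ = _ := by ring
  have hNγ : (N : ℝ) ^ γ * t ^ q ≤ 2 ^ γ * 2 ^ q * M ^ q := by
    have hLγ : L ^ γ * t ^ q = 2 ^ q * M ^ q := by
      rw [hL, ← Real.rpow_mul (by positivity), ← Real.mul_rpow (by norm_num) hM0.le]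
      have : 1 / (1 - β) * γ = q := by rw [hq]; ring
      rw [this, ← Real.mul_rpow (by positivity) ht0]
      congr 1; field_simp
    calc (N : ℝ) ^ γ * t ^ q ≤ (2 * L) ^ γ * t ^ q := by gcongr
      _ = 2 ^ γ * (L ^ γ * t ^ q) := by
          rw [Real.mul_rpow (by norm_num) (by linarith)]; ring
      _ = _ := by rw [hLγ]; ring
  have hrhs : w ^ β * t ^ (2 + q) = d ^ 2 * t ^ q := by
    rw [Real.rpow_add htpos, hss, ← sq_abs d, hdt]
    norm_num
    ring
  rw [ge_iff_le, hrhs]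
  calc d ^ 2 * t ^ q
      ≤ 4 / ω * 2 ^ ((n : ℝ) + γ) * ((N : ℝ) ^ γ * ‖h‖ ^ γ) * D * t ^ q := by gcongr
    _ = 4 / ω * 2 ^ ((n : ℝ) + γ) * ‖h‖ ^ γ * D * ((N : ℝ) ^ γ * t ^ q) := by ring
    _ ≤ 4 / ω * 2 ^ ((n : ℝ) + γ) * ‖h‖ ^ γ * D * (2 ^ γ * 2 ^ q * M ^ q) := by gcongr
    _ = _ := by ring
end
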